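/- arXiv:2507.10828 — 6 statements merged into one kernel-verified Lean document; each statement's English description precedes it below -/
import Mathlib

section
/- Let n ≥ 2, d ≥ 1, L ≥ 0 be integers with 2L ≤ d, let S ⊆ [n]^∞ be a d-maximal set containing no (L+1)-ball, let w ∈ S, and let t be a template of weight m ≤ d that is regular with respect to w. Let k ≥ 0, set S_k = {a ∈ S : dist(a,w) = k}, and let S′ ⊆ S_k[t] be a finite subset. Then there exists a template t′ of weight m+1, regular with respect to w, such that |S′[t′]| ≥ (1/n)·((k − m − L)/(d − m/2 − L/2))·|S′| (as real numbers). -/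
/-- Hamming distance between infinite words over `Fin n`, as an extended natural number. -/
noncomputable def hDist (n : ℕ) (a b : ℕ → Fin n) : ℕ∞ := {i | a i ≠ b i}.encard

/-- The `r`-ball around `a`. -/
def hBall (n : ℕ) (a : ℕ → Fin n) (r : ℕ) : Set (ℕ → Fin n) := {x | hDist n x a ≤ (r : ℕ∞)}

/-- `S` is `d`-maximal: it has diameter `d` and any point within distance `d`
of all of `S` already belongs to `S`. -/
def IsDMaximal (n d : ℕ) (S : Set (ℕ → Fin n)) : Prop :=
  (∀ a ∈ S, ∀ b ∈ S, hDist n a b ≤ (d : ℕ∞)) ∧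
  (∃ a ∈ S, ∃ b ∈ S, hDist n a b = (d : ℕ∞)) ∧
  (∀ x : ℕ → Fin n, (∀ s ∈ S, hDist n x s ≤ (d : ℕ∞)) → x ∈ S)

/-- `S` contains an `r`-ball. -/
def ContainsBall (n : ℕ) (S : Set (ℕ → Fin n)) (r : ℕ) : Prop :=
  ∃ a, hBall n a r ⊆ S

/-- A word `a` fits the template `t` (entries `none` are wildcards). -/
def Fits (n : ℕ) (a : ℕ → Fin n) (t : ℕ → Option (Fin n)) : Prop :=
  ∀ i x, t i = some x → a i = x

/-- A template is regular with respect to `w` if it never fixes the letter of `w`. -/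
def RegularWrt (n : ℕ) (w : ℕ → Fin n) (t : ℕ → Option (Fin n)) : Prop :=
  ∀ i, t i ≠ some (w i)

/-! Let `u` be `w` with the fixed letters of `t` written over it. Since the `(L + 1)`-ball around
`u` is not contained in `S`, maximality yields `s ∈ S` with `dist(u, s) ≥ d - L`. Let `D` be the set
of positions where `u` agrees with `w` but `s` does not. A word `a ∈ S` fitting `t` satisfies
`dist(a, s) ≤ d`, so if it is far from `w`, then on `D` it must often differ from `w` or agree with
`s`. Counting these incidences over all `a ∈ S'`, and then over the letters at the best position of
`D`, gives a popular letter different from that of `w`. The size of `D` is controlled by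
`2|D| + dist(u, w) ≤ dist(s, w) + dist(u, s)`. -/

open Finset

section Hamming

variable {n : ℕ}

theorem hDist_triangle (a b c : ℕ → Fin n) : hDist n a c ≤ hDist n a b + hDist n b c := by
  refine (Set.encard_le_encard fun i hi => ?_).trans (Set.encard_union_le _ _)
  by_contra h
  simp_all

theorem hDist_comm (a b : ℕ → Fin n) : hDist n a b = hDist n b a := by
  simp only [hDist, ne_comm]

/-- The positions at which `s` leaves `w` although `u` does not. With `u` a template written over
`w`, these are the candidates for the next position to be fixed. -/
def freshPositions (u w s : ℕ → Fin n) : Set ℕ := {i | u i = w i ∧ s i ≠ w i}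

theorem two_mul_encard_freshPositions_add_hDist_le (u w s : ℕ → Fin n) :
    2 * (freshPositions u w s).encard + hDist n u w ≤ hDist n s w + hDist n u s := by
  set T := {i | u i ≠ w i}
  set W := {i | s i ≠ w i}
  set D := freshPositions u w s
  have hs : D.encard + (T ∩ W).encard ≤ hDist n s w := by
    rw [← Set.encard_union_eq (Set.disjoint_left.2 fun i hi hi' => hi'.1 hi.1)]
    exact Set.encard_le_encard (Set.union_subset (fun i hi => hi.2) fun i hi => hi.2)
  have hu : D.encard + (T \ W).encard ≤ hDist n u s := by
    rw [← Set.encard_union_eq (Set.disjoint_left.2 fun i hi hi' => hi'.1 hi.1)]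
    refine Set.encard_le_encard (Set.union_subset (fun i hi => ?_) fun i hi => ?_)
    · exact hi.1.trans_ne hi.2.symm
    · exact ne_of_ne_of_eq hi.1 (not_not.1 hi.2).symm
  calc 2 * D.encard + T.encard
      = D.encard + (T ∩ W).encard + (D.encard + (T \ W).encard) := by
        rw [← Set.encard_sdiff_add_encard_inter T W]; ring
    _ ≤ hDist n s w + hDist n u s := add_le_add hs hu

theorem hDist_add_hDist_le_of_eq_of_ne {a u w : ℕ → Fin n} (s : ℕ → Fin n)
    (hau : ∀ i, u i ≠ w i → a i = u i) :
    hDist n a w + hDist n u s ≤ hDist n u w + hDist n a s +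
      ({i ∈ freshPositions u w s | a i ≠ w i}.encard +
        {i ∈ freshPositions u w s | a i = s i}.encard) := by
  set T := {i | u i ≠ w i}
  set D := freshPositions u w s
  set X := {i ∈ D | a i ≠ w i}
  set Y := {i ∈ D | a i = s i}
  set P := T ∩ {i | u i ≠ s i}
  set Z := {i ∈ D | a i ≠ s i}
  set C := {i | u i = w i ∧ s i = w i ∧ a i ≠ w i}
  have haw : hDist n a w ≤ T.encard + (X.encard + C.encard) := calc
    _ ≤ (T ∪ (X ∪ C)).encard := Set.encard_le_encard fun i hi => by grind [freshPositions]
    _ ≤ _ := (Set.encard_union_le _ _).trans (by gcongr; exact Set.encard_union_le _ _)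
  have hus : hDist n u s ≤ P.encard + (Z.encard + Y.encard) := calc
    _ ≤ (P ∪ (Z ∪ Y)).encard := Set.encard_le_encard fun i hi => by grind [freshPositions]
    _ ≤ _ := (Set.encard_union_le _ _).trans (by gcongr; exact Set.encard_union_le _ _)
  have has : P.encard + (Z.encard + C.encard) ≤ hDist n a s := by
    have hZC : Disjoint Z C := Set.disjoint_left.2 fun i hZ hC => hZ.1.2 hC.2.1
    have hP : Disjoint P (Z ∪ C) := Set.disjoint_left.2 fun i hP hZC =>
      hP.1 (hZC.elim (fun hZ => hZ.1.1) fun hC => hC.1)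
    rw [← Set.encard_union_eq hZC, ← Set.encard_union_eq hP]
    refine Set.encard_le_encard ?_
    rintro i (hP | hZ | hC)
    · exact (hau i hP.1).trans_ne hP.2
    · exact hZ.2
    · exact hC.2.2.trans_eq hC.2.1.symm
  calc hDist n a w + hDist n u s
      ≤ T.encard + (X.encard + C.encard) + (P.encard + (Z.encard + Y.encard)) :=
        add_le_add haw hus
    _ = T.encard + (P.encard + (Z.encard + C.encard)) + (X.encard + Y.encard) := by ring
    _ ≤ T.encard + hDist n a s + (X.encard + Y.encard) := by gcongr

end Hamming

section Maximal

variable {n d L : ℕ} {S : Set (ℕ → Fin n)}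

theorem IsDMaximal.exists_le_hDist_add (hmax : IsDMaximal n d S)
    (hball : ¬ ContainsBall n S (L + 1)) (u : ℕ → Fin n) : ∃ s ∈ S, (d : ℕ∞) ≤ hDist n u s + L := by
  obtain ⟨x, hxu, hxS⟩ : ∃ x ∈ hBall n u (L + 1), x ∉ S :=
    Set.not_subset.1 fun h => hball ⟨u, h⟩
  obtain ⟨s, hs, hxs⟩ : ∃ s ∈ S, (d : ℕ∞) < hDist n x s := by
    by_contra! h
    exact hxS (hmax.2.2 x h)
  refine ⟨s, hs, Order.le_of_lt_add_one ?_⟩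
  calc (d : ℕ∞) < hDist n x u + hDist n u s := hxs.trans_le (hDist_triangle x u s)
    _ ≤ (L + 1 : ℕ) + hDist n u s := by gcongr; exact hxu
    _ = hDist n u s + L + 1 := by push_cast; ring

end Maximal

section Template

variable {n : ℕ} {w : ℕ → Fin n} {t : ℕ → Option (Fin n)}

/-- The word obtained from `w` by writing the fixed letters of the template `t` over it. -/
def overwrite (w : ℕ → Fin n) (t : ℕ → Option (Fin n)) : ℕ → Fin n := fun i => (t i).getD (w i)

theorem RegularWrt.overwrite_ne_iff (ht : RegularWrt n w t) {i : ℕ} :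
    overwrite w t i ≠ w i ↔ t i ≠ none := by
  have := ht i
  cases h : t i <;> simp_all [overwrite]

theorem RegularWrt.hDist_overwrite (ht : RegularWrt n w t) :
    hDist n (overwrite w t) w = {i | t i ≠ none}.encard := by
  simp only [hDist, ht.overwrite_ne_iff]

theorem Fits.eq_overwrite {a : ℕ → Fin n} (ha : Fits n a t) {i : ℕ} (hi : t i ≠ none) :
    a i = overwrite w t i := by
  obtain ⟨x, hx⟩ := Option.ne_none_iff_exists'.1 hi
  simp [overwrite, hx, ha i x hx]

theorem RegularWrt.update_some (ht : RegularWrt n w t) {i : ℕ} {x : Fin n} (hx : x ≠ w i) :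
    RegularWrt n w (Function.update t i (some x)) := by
  intro j
  rcases eq_or_ne j i with rfl | hj
  · simpa using hx
  · simpa [hj] using ht j

theorem Fits.update_some_iff {a : ℕ → Fin n} (ha : Fits n a t) {i : ℕ} {x : Fin n} :
    Fits n a (Function.update t i (some x)) ↔ a i = x := by
  refine ⟨fun h => h i x (by simp), ?_⟩
  rintro rfl j y hj
  rcases eq_or_ne j i with rfl | hji
  · simpa using hj
  · exact ha j y (by simpa [hji] using hj)

theorem setOf_update_some_ne_none {ι α : Type*} [DecidableEq ι] (t : ι → Option α) (i : ι) (x : α) :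
    {j | Function.update t i (some x) j ≠ none} = insert i {j | t j ≠ none} := by
  ext j
  rcases eq_or_ne j i with rfl | hj <;> simp [*]

end Template

section Counting

variable {ι α β : Type*} [DecidableEq α]

theorem exists_card_filter_ne_add_card_filter_eq_le [Fintype α] (F : Finset β) (g : β → α) {y z : α}
    (hzy : z ≠ y) :
    ∃ x ≠ y, #{b ∈ F | g b ≠ y} + #{b ∈ F | g b = z} ≤ Fintype.card α * #{b ∈ F | g b = x} := by
  obtain ⟨x, hx, hmax⟩ := (univ.erase y).exists_max_image (fun x => #{b ∈ F | g b = x})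
    ⟨z, by simpa using hzy⟩
  refine ⟨x, ne_of_mem_erase hx, ?_⟩
  have hne : #{b ∈ F | g b ≠ y} ≤ #{b ∈ F | g b = x} * #(univ.erase y) :=
    card_le_mul_card_image_of_maps_to (f := g) (by simp) _ fun x' hx' =>
      (card_le_card (filter_subset_filter _ (filter_subset _ F))).trans (hmax x' hx')
  have hz : #{b ∈ F | g b = z} ≤ #{b ∈ F | g b = x} := hmax z (by simpa using hzy)
  calc #{b ∈ F | g b ≠ y} + #{b ∈ F | g b = z}
      ≤ #{b ∈ F | g b = x} * #(univ.erase y) + #{b ∈ F | g b = x} := add_le_add hne hz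
    _ = (#(univ.erase y) + 1) * #{b ∈ F | g b = x} := by ring
    _ = Fintype.card α * #{b ∈ F | g b = x} := by
      rw [card_erase_add_one (mem_univ y), card_univ]

theorem exists_sum_card_filter_le [Fintype α] {D : Finset ι} (hD : D.Nonempty)
    (F : Finset (ι → α)) {w s : ι → α} (hsw : ∀ i ∈ D, s i ≠ w i) :
    ∃ i ∈ D, ∃ x ≠ w i, ∑ a ∈ F, (#{i ∈ D | a i ≠ w i} + #{i ∈ D | a i = s i}) ≤
      #D * (Fintype.card α * #{a ∈ F | a i = x}) := by
  obtain ⟨i, hi, hmax⟩ :=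
    D.exists_max_image (fun i => #{a ∈ F | a i ≠ w i} + #{a ∈ F | a i = s i}) hD
  obtain ⟨x, hx, hle⟩ := exists_card_filter_ne_add_card_filter_eq_le F (fun a => a i) (hsw i hi)
  refine ⟨i, hi, x, hx, ?_⟩
  calc ∑ a ∈ F, (#{i ∈ D | a i ≠ w i} + #{i ∈ D | a i = s i})
      = ∑ i ∈ D, (#{a ∈ F | a i ≠ w i} + #{a ∈ F | a i = s i}) := by
        rw [sum_add_distrib, sum_add_distrib]
        congr 1 <;> exact sum_card_bipartiteAbove_eq_sum_card_bipartiteBelow _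
    _ ≤ #D * (#{a ∈ F | a i ≠ w i} + #{a ∈ F | a i = s i}) := sum_le_card_nsmul D _ _ hmax
    _ ≤ #D * (Fintype.card α * #{a ∈ F | a i = x}) := Nat.mul_le_mul_left _ hle

end Counting

theorem div_mul_le_of_mul_add_le {k m L d e δ N c : ℝ} (hN : 0 ≤ N) (hc : 0 ≤ c) (hk : m + L < k)
    (hkd : k ≤ 2 * d) (he : d ≤ e + L) (hδ : 2 * δ + m ≤ d + e)
    (hcount : N * (k + e) ≤ N * (m + d) + δ * c) :
    (k - m - L) / (d - m / 2 - L / 2) * N ≤ c := by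
  set K := k - m - L with hK
  set M := d - m / 2 - L / 2 with hM
  have hMpos : 0 < M := by linarith
  have hQpos : 0 < d + e - m := by linarith
  -- With the slack `f = e + L - d ≥ 0`, this reads `K * (2 * M + f) ≤ 2 * M * (K + f)`.
  have hKQ : K * (d + e - m) ≤ 2 * M * (k + e - m - d) := by
    have h : 0 ≤ (2 * M - K) * (e + L - d) := mul_nonneg (by linarith) (by linarith)
    calc K * (d + e - m) = 2 * M * (k + e - m - d) - (2 * M - K) * (e + L - d) := by
          rw [hK, hM]; ring
      _ ≤ 2 * M * (k + e - m - d) := sub_le_self _ h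
  rw [div_mul_eq_mul_div, div_le_iff₀ hMpos]
  refine le_of_mul_le_mul_right ?_ hQpos
  calc K * N * (d + e - m) = N * (K * (d + e - m)) := by ring
    _ ≤ N * (2 * M * (k + e - m - d)) := by gcongr
    _ = 2 * M * (N * (k + e) - N * (m + d)) := by ring
    _ ≤ 2 * M * (δ * c) := by gcongr; linarith
    _ = M * c * (2 * δ) := by ring
    _ ≤ M * c * (d + e - m) := by gcongr; linarith
    _ = c * M * (d + e - m) := by ring

section Popular

variable {n d k m : ℕ} {u w s : ℕ → Fin n} {F : Finset (ℕ → Fin n)}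

theorem exists_letter_card_mul_add_le {e : ℕ} {D : Finset ℕ} (hF : F.Nonempty)
    (hD : (D : Set ℕ) = freshPositions u w s) (huw : hDist n u w = m) (hus : hDist n u s = e)
    (hlt : m + d < k + e) (haw : ∀ a ∈ F, hDist n a w = k) (has : ∀ a ∈ F, hDist n a s ≤ d)
    (hau : ∀ a ∈ F, ∀ i, u i ≠ w i → a i = u i) :
    ∃ i ∈ D, ∃ x ≠ w i,
      #F * (k + e) ≤ #F * (m + d) + #D * (n * #{a ∈ F | a i = x}) := by
  have hrow : ∀ a ∈ F, k + e ≤ m + d + (#{i ∈ D | a i ≠ w i} + #{i ∈ D | a i = s i}) := by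
    intro a ha
    have h := (hDist_add_hDist_le_of_eq_of_ne s (hau a ha)).trans
      (add_le_add_left (add_le_add_right (has a ha) _) _)
    simp only [← hD, mem_coe, ← coe_filter, Set.encard_coe_eq_coe_finsetCard, huw, haw a ha,
      hus] at h
    exact_mod_cast h
  have hDne : D.Nonempty := by
    obtain ⟨a, ha⟩ := hF
    by_contra! hD
    have := hrow a ha
    simp only [hD, filter_empty, card_empty] at this
    lia
  obtain ⟨i, hi, x, hx, hle⟩ := exists_sum_card_filter_le hDne F fun i hi => (hD.subset hi).2
  rw [Fintype.card_fin] at hle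
  refine ⟨i, hi, x, hx, ?_⟩
  calc #F * (k + e) ≤ ∑ a ∈ F, (m + d + (#{i ∈ D | a i ≠ w i} + #{i ∈ D | a i = s i})) :=
        card_nsmul_le_sum F _ _ hrow
    _ = #F * (m + d) + ∑ a ∈ F, (#{i ∈ D | a i ≠ w i} + #{i ∈ D | a i = s i}) := by
        rw [sum_add_distrib, sum_const, smul_eq_mul]
    _ ≤ #F * (m + d) + #D * (n * #{a ∈ F | a i = x}) := by gcongr

theorem exists_popular_letter_of_le_hDist {L : ℕ} (hF : F.Nonempty) (huw : hDist n u w = m)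
    (hsw : hDist n s w ≤ d) (hus : (d : ℕ∞) ≤ hDist n u s + L) (hk : m + L < k)
    (haw : ∀ a ∈ F, hDist n a w = k) (has : ∀ a ∈ F, hDist n a s ≤ d)
    (hau : ∀ a ∈ F, ∀ i, u i ≠ w i → a i = u i) :
    ∃ i, u i = w i ∧ ∃ x ≠ w i,
      ((k : ℝ) - m - L) / (d - m / 2 - L / 2) * #F ≤ n * #{a ∈ F | a i = x} := by
  obtain ⟨e, he⟩ : ∃ e : ℕ, (e : ℕ∞) = hDist n u s := by
    refine ENat.ne_top_iff_exists.1 (ne_top_of_le_ne_top (ENat.natCast_ne_top (m + d)) ?_)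
    rw [Nat.cast_add, ← huw]
    exact (hDist_triangle u w s).trans (by rw [hDist_comm w s]; gcongr)
  obtain ⟨D, hD⟩ : ∃ D : Finset ℕ, (D : Set ℕ) = freshPositions u w s :=
    (Set.finite_of_encard_le_coe
      ((Set.encard_le_encard fun i hi => hi.2).trans hsw)).exists_finset_coe
  have hkd : k ≤ d + d := by
    obtain ⟨a, ha⟩ := hF
    exact_mod_cast (haw a ha).symm.trans_le
      ((hDist_triangle a s w).trans (add_le_add (has a ha) hsw))
  have hed : d ≤ e + L := by rw [← he] at hus; exact_mod_cast hus
  have hcard : 2 * #D + m ≤ d + e := by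
    have h := (two_mul_encard_freshPositions_add_hDist_le u w s).trans (add_le_add_left hsw _)
    rw [← hD, Set.encard_coe_eq_coe_finsetCard, huw, ← he] at h
    exact_mod_cast h
  obtain ⟨i, hi, x, hx, hcount⟩ :=
    exists_letter_card_mul_add_le hF hD huw he.symm (by lia) haw has hau
  refine ⟨i, (hD.subset hi).1, x, hx, ?_⟩
  exact div_mul_le_of_mul_add_le (δ := #D) (e := e) (by positivity) (by positivity)
    (by exact_mod_cast hk) (by rw [two_mul]; exact_mod_cast hkd) (by exact_mod_cast hed)
    (by exact_mod_cast hcard) (by exact_mod_cast hcount)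

end Popular

section Extension

variable {n d L m k : ℕ} {S : Set (ℕ → Fin n)} {w : ℕ → Fin n} {t : ℕ → Option (Fin n)}

theorem IsDMaximal.exists_popular_letter (hmax : IsDMaximal n d S)
    (hball : ¬ ContainsBall n S (L + 1)) (hw : w ∈ S) (ht : RegularWrt n w t)
    (hm : {i | t i ≠ none}.encard = m) {F : Finset (ℕ → Fin n)} (hF : F.Nonempty)
    (hFS : ∀ a ∈ F, a ∈ S ∧ hDist n a w = k ∧ Fits n a t) (hk : m + L < k) :
    ∃ i, t i = none ∧ ∃ x ≠ w i,
      ((k : ℝ) - m - L) / (d - m / 2 - L / 2) * #F ≤ n * #{a ∈ F | a i = x} := by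
  obtain ⟨s, hs, hus⟩ := hmax.exists_le_hDist_add hball (overwrite w t)
  obtain ⟨i, hi, hx⟩ := exists_popular_letter_of_le_hDist hF (ht.hDist_overwrite.trans hm)
    (hmax.1 s hs w hw) hus hk (fun a ha => (hFS a ha).2.1) (fun a ha => hmax.1 a (hFS a ha).1 s hs)
    fun a ha i hi => (hFS a ha).2.2.eq_overwrite (ht.overwrite_ne_iff.1 hi)
  exact ⟨i, not_ne_iff.1 fun h => ht.overwrite_ne_iff.2 h hi, hx⟩

theorem exists_eq_none_and_exists_ne (hn : 2 ≤ n) (htfin : {i | t i ≠ none}.Finite)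
    (w : ℕ → Fin n) : ∃ i, t i = none ∧ ∃ x, x ≠ w i := by
  have : Nontrivial (Fin n) := Fin.nontrivial_iff_two_le.2 hn
  obtain ⟨i, hi⟩ := htfin.exists_notMem
  exact ⟨i, not_ne_iff.1 hi, exists_ne (w i)⟩

theorem IsDMaximal.exists_letter_one_div_mul_ncard_le (hn : 2 ≤ n) (hmL : m + L < 2 * d)
    (hmax : IsDMaximal n d S) (hball : ¬ ContainsBall n S (L + 1)) (hw : w ∈ S)
    (htfin : {i | t i ≠ none}.Finite) (hm : {i | t i ≠ none}.ncard = m) (ht : RegularWrt n w t)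
    {S' : Set (ℕ → Fin n)} (hS'fin : S'.Finite)
    (hS' : S' ⊆ {a ∈ S | hDist n a w = k ∧ Fits n a t}) :
    ∃ i, t i = none ∧ ∃ x ≠ w i,
      1 / (n : ℝ) * (((k : ℝ) - m - L) / (d - m / 2 - L / 2)) * S'.ncard ≤
        {a ∈ S' | a i = x}.ncard := by
  lift S' to Finset (ℕ → Fin n) using hS'fin
  simp only [mem_coe, ← coe_filter, Set.ncard_coe_finset]
  by_cases hpos : S'.Nonempty ∧ m + L < k
  · obtain ⟨i, hi, x, hx, hle⟩ := hmax.exists_popular_letter hball hw ht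
      (by rw [← htfin.cast_ncard_eq, hm]) hpos.1 hS' hpos.2
    refine ⟨i, hi, x, hx, ?_⟩
    rwa [mul_assoc, one_div, inv_mul_le_iff₀ (by positivity)]
  · obtain ⟨i, hi, x, hx⟩ := exists_eq_none_and_exists_ne hn htfin w
    refine ⟨i, hi, x, hx, le_trans ?_ (Nat.cast_nonneg _)⟩
    rcases not_and_or.1 hpos with hempty | hk
    · simp [not_nonempty_iff_eq_empty.1 hempty]
    · have hK : (k : ℝ) - m - L ≤ 0 := by
        have : (k : ℝ) ≤ m + L := by exact_mod_cast not_lt.1 hk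
        linarith
      have hM : 0 ≤ (d : ℝ) - m / 2 - L / 2 := by
        have : (m : ℝ) + L < 2 * d := by exact_mod_cast hmL
        linarith
      exact mul_nonpos_of_nonpos_of_nonneg (mul_nonpos_of_nonneg_of_nonpos (by positivity)
        (div_nonpos_of_nonpos_of_nonneg hK hM)) (Nat.cast_nonneg _)

end Extension

theorem stmt8_general (n d L : ℕ) (hn : 2 ≤ n)
    (S : Set (ℕ → Fin n)) (hmax : IsDMaximal n d S) (hball : ¬ ContainsBall n S (L + 1))
    (w : ℕ → Fin n) (hw : w ∈ S)
    (t : ℕ → Option (Fin n)) (htfin : {i | t i ≠ none}.Finite)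
    (m : ℕ) (hwt : {i | t i ≠ none}.ncard = m) (hmL : m + L < 2 * d)
    (hreg : RegularWrt n w t)
    (k : ℕ) (S' : Set (ℕ → Fin n)) (hS'fin : S'.Finite)
    (hS'sub : S' ⊆ {a ∈ S | hDist n a w = (k : ℕ∞) ∧ Fits n a t}) :
    ∃ t' : ℕ → Option (Fin n),
      {i | t' i ≠ none}.Finite ∧ {i | t' i ≠ none}.ncard = m + 1 ∧ RegularWrt n w t' ∧
      (1 / (n : ℝ)) * (((k : ℝ) - (m : ℝ) - (L : ℝ)) / ((d : ℝ) - (m : ℝ) / 2 - (L : ℝ) / 2)) *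
          (S'.ncard : ℝ) ≤ ({a ∈ S' | Fits n a t'}.ncard : ℝ) := by
  obtain ⟨i, hi, x, hx, hle⟩ := hmax.exists_letter_one_div_mul_ncard_le hn hmL hball hw htfin hwt
    hreg hS'fin hS'sub
  refine ⟨Function.update t i (some x), ?_, ?_, hreg.update_some hx, ?_⟩
  · rw [setOf_update_some_ne_none]
    exact htfin.insert i
  · rw [setOf_update_some_ne_none, Set.ncard_insert_of_notMem (by simpa using hi) htfin, hwt]
  · have hfits : {a ∈ S' | Fits n a (Function.update t i (some x))} = {a ∈ S' | a i = x} :=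
      Set.ext fun a => and_congr_right fun ha => (hS'sub ha).2.2.update_some_iff
    rwa [hfits]

theorem stmt8 (n d L : ℕ) (hn : 2 ≤ n) (hd : 1 ≤ d) (hL : 2 * L ≤ d)
    (S : Set (ℕ → Fin n)) (hmax : IsDMaximal n d S) (hball : ¬ ContainsBall n S (L + 1))
    (w : ℕ → Fin n) (hw : w ∈ S)
    (t : ℕ → Option (Fin n)) (htfin : {i | t i ≠ none}.Finite)
    (m : ℕ) (hwt : {i | t i ≠ none}.ncard = m) (hmd : m ≤ d)
    (hreg : RegularWrt n w t)
    (k : ℕ) (S' : Set (ℕ → Fin n)) (hS'fin : S'.Finite)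
    (hS'sub : S' ⊆ {a ∈ S | hDist n a w = (k : ℕ∞) ∧ Fits n a t}) :
    ∃ t' : ℕ → Option (Fin n),
      {i | t' i ≠ none}.Finite ∧ {i | t' i ≠ none}.ncard = m + 1 ∧ RegularWrt n w t' ∧
      (1 / (n : ℝ)) * (((k : ℝ) - (m : ℝ) - (L : ℝ)) / ((d : ℝ) - (m : ℝ) / 2 - (L : ℝ) / 2)) *
          (S'.ncard : ℝ) ≤ ({a ∈ S' | Fits n a t'}.ncard : ℝ) := by
  exact stmt8_general n d L hn S hmax hball w hw t htfin m hwt (by lia) hreg k S' hS'fin hS'sub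
end

section
/- Let n ≥ 2, p ≥ n, k ≥ 1 be integers, let w ∈ [n]^∞, and let X ⊆ [n]^∞ be a set of words each at Hamming distance exactly k from w. If |X| > Sun(p, 2k) (in particular, if X is infinite), then X contains p distinct words that form a p-sunflower with respect to w. -/
/-- A family of `p` sets forming a sunflower: `p` distinct sets whose pairwise
intersections are all equal. -/
def IsSunflowerFam (p : ℕ) (F : Finset (Finset ℕ)) : Prop :=
  F.card = p ∧ ∃ C : Finset ℕ, ∀ A ∈ F, ∀ B ∈ F, A ≠ B → A ∩ B = C

/-- `Sun p k`: the least `N` such that every family of more than `N` distinct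
`k`-element sets contains a `p`-sunflower. -/
noncomputable def Sun (p k : ℕ) : ℕ :=
  sInf {N : ℕ | ∀ F : Finset (Finset ℕ), (∀ A ∈ F, A.card = k) → N < F.card →
    ∃ G ⊆ F, IsSunflowerFam p G}

/-- The words `f 0, …, f (p-1)` form a `p`-sunflower with respect to `w`: they are
distinct, and in each coordinate either all agree, or exactly one differs from `w`. -/
def SunflowerWrt (n p : ℕ) (w : ℕ → Fin n) (f : Fin p → (ℕ → Fin n)) : Prop :=
  Function.Injective f ∧
  ∀ i : ℕ, (∀ j j' : Fin p, f j i = f j' i) ∨ (∃! j : Fin p, f j i ≠ w i)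

/-!
Code each word `a` by the set that contains, for every position `i` with `a i ≠ w i`, both `i` and
the pair `(i, a i)`; the codes have `2 * k` elements, so `p` of them form a sunflower. If two of
these words deviate from `w` at position `i`, then `i` lies in the core, so all `p` words deviate
there. At most `p - 1` letters are different from `w i`, so two words carry the same letter `v`
at `i`. Hence `(i, v)` lies in the core as well, and all `p` words have the letter `v` at `i`.

That `Sun p k` is an infimum over a nonempty set is the Erdős–Rado lemma: either a maximal disjoint
subfamily is itself a sunflower, or its union is small and meets every member, so some point
lies in many members and can be removed from them.
-/

section ErdosRado

open Finset

variable {β : Type*} [DecidableEq β] {𝒜 : Finset (Finset β)} {p k : ℕ}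

/-- The set family `𝒜` contains a sunflower with `p` petals and some core `C`. This is the notion
`IsSunflowerFam` over an arbitrary ground type. -/
def ContainsSunflower (p : ℕ) (𝒜 : Finset (Finset β)) : Prop :=
  ∃ 𝒢 ⊆ 𝒜, #𝒢 = p ∧ ∃ C, (𝒢 : Set (Finset β)).Pairwise fun A B => A ∩ B = C

theorem ContainsSunflower.of_pairwiseDisjoint {𝒟 : Finset (Finset β)} (h𝒟 : 𝒟 ⊆ 𝒜)
    (hdisj : (𝒟 : Set (Finset β)).PairwiseDisjoint id) (hp : p ≤ #𝒟) :
    ContainsSunflower p 𝒜 := by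
  obtain ⟨𝒢, h𝒢, hcard⟩ := exists_subset_card_eq hp
  exact ⟨𝒢, h𝒢.trans h𝒟, hcard, ∅, fun A hA B hB hAB =>
    disjoint_iff_inter_eq_empty.mp (hdisj (h𝒢 hA) (h𝒢 hB) hAB)⟩

theorem ContainsSunflower.of_memberSubfamily {x : β}
    (h : ContainsSunflower p (𝒜.memberSubfamily x)) : ContainsSunflower p 𝒜 := by
  obtain ⟨𝒢, h𝒢, hcard, C, hC⟩ := h
  have hmem : ∀ A ∈ 𝒢, insert x A ∈ 𝒜 ∧ x ∉ A := fun A hA => mem_memberSubfamily.mp (h𝒢 hA)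
  have hinj : Set.InjOn (insert x) (𝒢 : Set (Finset β)) :=
    insert_erase_invOn.2.injOn.mono fun A hA => (hmem A hA).2
  refine ⟨𝒢.image (insert x), image_subset_iff.mpr fun A hA => (hmem A hA).1,
    (card_image_of_injOn hinj).trans hcard, insert x C, ?_⟩
  rw [coe_image, hinj.pairwise_image]
  intro A hA B hB hAB
  simp only [Function.onFun, ← insert_inter_distrib, hC hA hB hAB]

theorem exists_disjoint_family_biUnion_meets (h𝒜 : ∅ ∉ 𝒜) :
    ∃ 𝒟 ⊆ 𝒜, (𝒟 : Set (Finset β)).PairwiseDisjoint id ∧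
      ∀ A ∈ 𝒜, ∃ x ∈ 𝒟.biUnion id, x ∈ A := by
  classical
  let families : Finset (Finset (Finset β)) :=
    {𝒟 ∈ 𝒜.powerset | (𝒟 : Set (Finset β)).PairwiseDisjoint id}
  obtain ⟨𝒟, h𝒟⟩ := families.exists_maximal ⟨∅, by simp [families]⟩
  obtain ⟨hsub, hdisj⟩ : 𝒟 ⊆ 𝒜 ∧ (𝒟 : Set (Finset β)).PairwiseDisjoint id := by
    simpa only [families, mem_filter, mem_powerset] using h𝒟.prop
  refine ⟨𝒟, hsub, hdisj, fun A hA => ?_⟩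
  by_contra! hA𝒟
  have hAdisj : ∀ B ∈ 𝒟, Disjoint A B := fun B hB =>
    disjoint_right.mpr fun x hx => hA𝒟 x (mem_biUnion.mpr ⟨B, hB, hx⟩)
  have hinsert : insert A 𝒟 ∈ families := by
    rw [mem_filter, mem_powerset, coe_insert]
    exact ⟨insert_subset hA hsub, hdisj.insert fun B hB _ => hAdisj B hB⟩
  have hAmem : A ∈ 𝒟 := h𝒟.le_of_ge hinsert (subset_insert A 𝒟) (mem_insert_self A 𝒟)
  exact h𝒜 (disjoint_self_iff_empty A |>.mp (hAdisj A hAmem) ▸ hA)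

theorem exists_lt_card_memberSubfamily {U : Finset β} {N : ℕ}
    (hU : ∀ A ∈ 𝒜, ∃ x ∈ U, x ∈ A) (hN : #U * N < #𝒜) :
    ∃ x, N < #(𝒜.memberSubfamily x) := by
  by_contra! hle
  have hcover : 𝒜 ⊆ U.biUnion fun x => {A ∈ 𝒜 | x ∈ A} := fun A hA => by
    obtain ⟨x, hx, hxA⟩ := hU A hA
    exact mem_biUnion.mpr ⟨x, hx, mem_filter.mpr ⟨hA, hxA⟩⟩
  have hcard (x : β) : #{A ∈ 𝒜 | x ∈ A} ≤ N := by
    refine le_trans (card_image_of_injOn ?_).ge (hle x)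
    exact (erase_injOn' x).mono fun A hA => (mem_filter.mp hA).2
  exact hN.not_ge ((card_le_card hcover).trans (card_biUnion_le_card_mul _ _ _ fun x _ => hcard x))

theorem sized_memberSubfamily (h𝒜 : (𝒜 : Set (Finset β)).Sized (k + 1)) (x : β) :
    (𝒜.memberSubfamily x : Set (Finset β)).Sized k := fun A hA => by
  obtain ⟨hins, hx⟩ := mem_memberSubfamily.mp hA
  simpa only [card_insert_of_notMem hx, Nat.add_right_cancel_iff] using h𝒜 hins

theorem containsSunflower_of_factorial_mul_pow_lt_card
    (h𝒜 : (𝒜 : Set (Finset β)).Sized k) (hcard : k.factorial * (p - 1) ^ k < #𝒜) :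
    ContainsSunflower p 𝒜 := by
  induction k generalizing 𝒜 with
  | zero =>
    have hsub : 𝒜 ⊆ {∅} := fun A hA => mem_singleton.mpr (card_eq_zero.mp (h𝒜 hA))
    have hone : #𝒜 ≤ 1 := card_le_card hsub
    simp only [Nat.factorial_zero, pow_zero, mul_one] at hcard
    omega
  | succ k ih =>
    have hempty : ∅ ∉ 𝒜 := fun h => k.succ_ne_zero (h𝒜 h).symm
    obtain ⟨𝒟, h𝒟, hdisj, hmeets⟩ := exists_disjoint_family_biUnion_meets hempty
    by_cases hp : p ≤ #𝒟
    · exact .of_pairwiseDisjoint h𝒟 hdisj hp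
    have hunion : #(𝒟.biUnion id) ≤ (p - 1) * (k + 1) :=
      (card_biUnion_le_card_mul 𝒟 id (k + 1) fun A hA => (h𝒜 (h𝒟 hA)).le).trans
        (Nat.mul_le_mul_right _ (by omega))
    obtain ⟨x, hx⟩ : ∃ x, k.factorial * (p - 1) ^ k < #(𝒜.memberSubfamily x) := by
      refine exists_lt_card_memberSubfamily hmeets (lt_of_le_of_lt ?_ hcard)
      calc #(𝒟.biUnion id) * (k.factorial * (p - 1) ^ k)
          ≤ (p - 1) * (k + 1) * (k.factorial * (p - 1) ^ k) := Nat.mul_le_mul_right _ hunion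
        _ = (k + 1).factorial * (p - 1) ^ (k + 1) := by rw [Nat.factorial_succ]; ring
    exact (ih (sized_memberSubfamily h𝒜 x) hx).of_memberSubfamily

end ErdosRado

section Sun

variable {ω β : Type*} {p k : ℕ}

theorem containsSunflower_of_sun_lt_card {𝒜 : Finset (Finset ℕ)}
    (h𝒜 : (𝒜 : Set (Finset ℕ)).Sized k) (hcard : Sun p k < 𝒜.card) : ContainsSunflower p 𝒜 :=
  Nat.sInf_mem (s := {N : ℕ | ∀ F : Finset (Finset ℕ), (∀ A ∈ F, A.card = k) → N < F.card →
      ∃ G ⊆ F, IsSunflowerFam p G})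
    ⟨_, fun _ hF h => containsSunflower_of_factorial_mul_pow_lt_card hF h⟩ 𝒜 h𝒜 hcard

theorem exists_sunflower_subfamily_of_sun_lt_card {T : Finset ω} {A : ω → Finset ℕ}
    (hinj : Set.InjOn A T) (hA : ∀ a ∈ T, (A a).card = k) (hcard : Sun p k < T.card) :
    ∃ f : Fin p → ω, (∀ j, f j ∈ T) ∧ Function.Injective f ∧
      ∃ C, Pairwise fun j j' => A (f j) ∩ A (f j') = C := by
  have hsized : (T.image A : Set (Finset ℕ)).Sized k := by
    rw [Finset.coe_image]
    rintro _ ⟨a, ha, rfl⟩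
    exact hA a ha
  obtain ⟨𝒢, h𝒢, hp, C, hC⟩ := containsSunflower_of_sun_lt_card (p := p) hsized
    (by rwa [Finset.card_image_of_injOn hinj])
  let e : Fin p ≃ 𝒢 := (𝒢.equivFinOfCardEq hp).symm
  choose f hfT hfe using fun j => Finset.mem_image.mp (h𝒢 (e j).2)
  have hAf : Function.Injective (A ∘ f) := by
    rw [show A ∘ f = Subtype.val ∘ e from funext hfe]
    exact Subtype.val_injective.comp e.injective
  refine ⟨f, hfT, hAf.of_comp, C, fun j j' hj => hC ?_ ?_ (hAf.ne hj)⟩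
  · exact hfe j ▸ (e j).2
  · exact hfe j' ▸ (e j').2

-- `Sun` only speaks of subsets of `ℕ`; finitely many finite sets over any ground type live on a
-- finite subset of it, which embeds into `ℕ`.
theorem exists_sunflower_subfamily_of_sun_lt_encard {X : Set ω} {A : ω → Set β}
    (hinj : Set.InjOn A X) (hA : ∀ a ∈ X, (A a).encard = k)
    (hcard : (Sun p k : ℕ∞) < X.encard) :
    ∃ f : Fin p → ω, (∀ j, f j ∈ X) ∧ Function.Injective f ∧
      ∃ C, Pairwise fun j j' => A (f j) ∩ A (f j') = C := by
  obtain ⟨T, hTX, hT⟩ : ∃ T : Finset ω, ↑T ⊆ X ∧ T.card = Sun p k + 1 := by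
    obtain ⟨T, hTX, hT⟩ := Set.exists_subset_encard_eq (Order.add_one_le_of_lt hcard)
    lift T to Finset ω using Set.finite_of_encard_eq_coe (k := Sun p k + 1) (by exact_mod_cast hT)
    exact ⟨T, hTX, by exact_mod_cast Set.encard_coe_eq_coe_finsetCard T ▸ hT⟩
  have hfin : ∀ a ∈ T, (A a).Finite := fun a ha => Set.finite_of_encard_eq_coe (hA a (hTX ha))
  let U : Set β := ⋃ a ∈ T, A a
  have hU : ∀ a ∈ T, A a ⊆ U := fun a ha => Set.subset_biUnion_of_mem (u := A) ha
  obtain ⟨e, he⟩ := Set.countable_iff_exists_injOn.mp (T.finite_toSet.biUnion hfin).countable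
  choose! B hB using fun a ha => ((hfin a ha).image e).exists_finset_coe
  have hBinj : Set.InjOn B T := fun a ha b hb hab => by
    refine hinj (hTX ha) (hTX hb) ((he.image_eq_image_iff (hU a ha) (hU b hb)).mp ?_)
    rw [← hB a ha, ← hB b hb, hab]
  have hBcard : ∀ a ∈ T, (B a).card = k := fun a ha => by
    have h : ((B a).card : ℕ∞) = k := by
      rw [← Set.encard_coe_eq_coe_finsetCard, hB a ha, (he.mono (hU a ha)).encard_image,
        hA a (hTX ha)]
    exact_mod_cast h
  obtain ⟨f, hfT, hf, C, hC⟩ :=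
    exists_sunflower_subfamily_of_sun_lt_card (p := p) hBinj hBcard (by omega)
  refine ⟨f, fun j => hTX (hfT j), hf, e ⁻¹' C ∩ U, fun j j' hj => ?_⟩
  have hAU := hU _ (hfT j)
  have hAU' := hU _ (hfT j')
  calc A (f j) ∩ A (f j')
      = e ⁻¹' (e '' (A (f j) ∩ A (f j'))) ∩ U :=
        (he.preimage_image_inter (Set.inter_subset_left.trans hAU)).symm
    _ = e ⁻¹' C ∩ U := by
        rw [he.image_inter hAU hAU', ← hB _ (hfT j), ← hB _ (hfT j'), ← Finset.coe_inter, hC hj]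

end Sun

section DeviationCode

variable {ι α : Type*} {w a : ι → α} {i : ι} {v : α}

/-- The code of the word `a` relative to `w`: for every position `i` at which `a` deviates from `w`
it contains both `i` and the pair `(i, a i)`. In a sunflower of codes, the positions in the core
are those where several words deviate, the pairs in the core those where they also agree. -/
def deviationCode (w a : ι → α) : Set (ι ⊕ ι × α) :=
  Sum.inl '' {i | a i ≠ w i} ∪ (fun i => Sum.inr (i, a i)) '' {i | a i ≠ w i}

theorem inl_mem_deviationCode : Sum.inl i ∈ deviationCode w a ↔ a i ≠ w i := by
  simp [deviationCode]

theorem inr_mem_deviationCode : Sum.inr (i, v) ∈ deviationCode w a ↔ a i ≠ w i ∧ a i = v := by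
  simp [deviationCode]

theorem encard_deviationCode (w a : ι → α) :
    (deviationCode w a).encard = 2 * {i | a i ≠ w i}.encard := by
  have hinr : Function.Injective fun i => (Sum.inr (i, a i) : ι ⊕ ι × α) := fun i j h =>
    congrArg Prod.fst (Sum.inr_injective h)
  rw [deviationCode, Set.encard_union_eq, Sum.inl_injective.encard_image, hinr.encard_image,
    two_mul]
  rw [Set.disjoint_left]
  rintro _ ⟨i, -, rfl⟩ ⟨j, -, h⟩
  exact Sum.inr_ne_inl h

theorem deviationCode_injective (w : ι → α) : Function.Injective (deviationCode w) := by
  intro a b hab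
  funext i
  by_cases ha : a i = w i
  · have hb : ¬b i ≠ w i := by rwa [← inl_mem_deviationCode, ← hab, inl_mem_deviationCode, not_not]
    exact ha.trans (not_not.mp hb).symm
  · have h : Sum.inr (i, a i) ∈ deviationCode w b := hab ▸ inr_mem_deviationCode.mpr ⟨ha, rfl⟩
    exact (inr_mem_deviationCode.mp h).2.symm

theorem subset_of_pairwise_inter_eq {J β : Type*} [Nontrivial J] {A : J → Set β} {C : Set β}
    (hC : Pairwise fun j j' => A j ∩ A j' = C) (j : J) : C ⊆ A j := by
  obtain ⟨j', hj'⟩ := exists_ne j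
  exact hC hj'.symm ▸ Set.inter_subset_left

theorem exists_ne_map_eq_of_forall_ne [Finite α] {J : Type*} (hcard : Nat.card α ≤ Nat.card J)
    {g : J → α} (hg : ∀ j, g j ≠ v) : ∃ j j', j ≠ j' ∧ g j = g j' := by
  by_contra! hne
  have hinj : Function.Injective g := fun j j' h => by_contra fun hj => hne j j' hj h
  obtain ⟨j, hj⟩ := (hinj.bijective_of_nat_card_le hcard).surjective v
  exact hg j hj

theorem forall_eq_or_existsUnique_ne_of_pairwise_deviationCode_inter_eq [Finite α] {J : Type*}
    (hcard : Nat.card α ≤ Nat.card J) {f : J → ι → α} {C : Set (ι ⊕ ι × α)}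
    (hC : Pairwise fun j j' => deviationCode w (f j) ∩ deviationCode w (f j') = C) (i : ι) :
    (∀ j j', f j i = f j' i) ∨ ∃! j, f j i ≠ w i := by
  by_cases hw : ∀ j, f j i = w i
  · exact .inl fun j j' => (hw j).trans (hw j').symm
  obtain ⟨j, hj⟩ := not_forall.mp hw
  by_cases huniq : ∀ j', f j' i ≠ w i → j' = j
  · exact .inr ⟨j, hj, huniq⟩
  push Not at huniq
  obtain ⟨j', hj', hne⟩ := huniq
  have : Nontrivial J := ⟨j', j, hne⟩
  have hcore := subset_of_pairwise_inter_eq hC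
  have hpos : Sum.inl i ∈ C :=
    hC hne ▸ ⟨inl_mem_deviationCode.mpr hj', inl_mem_deviationCode.mpr hj⟩
  have hdev (l : J) : f l i ≠ w i := inl_mem_deviationCode.mp (hcore l hpos)
  obtain ⟨l, l', hll', heq⟩ := exists_ne_map_eq_of_forall_ne hcard hdev
  have hpair : Sum.inr (i, f l i) ∈ C :=
    hC hll' ▸ ⟨inr_mem_deviationCode.mpr ⟨hdev l, rfl⟩,
      inr_mem_deviationCode.mpr ⟨hdev l', heq.symm⟩⟩
  have hval (m : J) : f m i = f l i := (inr_mem_deviationCode.mp (hcore m hpair)).2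
  exact .inl fun m m' => (hval m).trans (hval m').symm

end DeviationCode

theorem stmt9_general {ι α : Type*} [Finite α] {p k : ℕ} (hp : Nat.card α ≤ p) (w : ι → α)
    (X : Set (ι → α)) (hX : ∀ a ∈ X, {i | a i ≠ w i}.encard = k)
    (hcard : (Sun p (2 * k) : ℕ∞) < X.encard) :
    ∃ f : Fin p → ι → α, (∀ j, f j ∈ X) ∧ Function.Injective f ∧
      ∀ i, (∀ j j', f j i = f j' i) ∨ ∃! j, f j i ≠ w i := by
  have hcode : ∀ a ∈ X, (deviationCode w a).encard = (2 * k : ℕ) := fun a ha => by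
    rw [encard_deviationCode, hX a ha, Nat.cast_mul, Nat.cast_ofNat]
  obtain ⟨f, hfX, hf, C, hC⟩ := exists_sunflower_subfamily_of_sun_lt_encard
    (deviationCode_injective w).injOn hcode hcard
  exact ⟨f, hfX, hf,
    forall_eq_or_existsUnique_ne_of_pairwise_deviationCode_inter_eq (by rwa [Nat.card_fin]) hC⟩

theorem stmt9 (n p k : ℕ) (hn : 2 ≤ n) (hp : n ≤ p) (hk : 1 ≤ k)
    (w : ℕ → Fin n) (X : Set (ℕ → Fin n)) (hX : ∀ a ∈ X, hDist n a w = (k : ℕ∞))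
    (hcard : (Sun p (2 * k) : ℕ∞) < X.encard) :
    ∃ f : Fin p → (ℕ → Fin n), (∀ j, f j ∈ X) ∧ SunflowerWrt n p w f :=
  stmt9_general (by rwa [Nat.card_fin]) w X hX hcard
end

section
/- Let n ≥ 2 and d ≥ 0 be integers. If S ⊆ [n]^∞ is a d-maximal set that contains no 1-ball, then S is finite and |S| ≤ (2n)^d. -/
/-!
Fix `a ∈ S`. The words of `S` at distance `j` from `a` are counted by building them from `a` one
altered coordinate at a time. Suppose `w` agrees coordinatewise with `a` or with the target `x`,
differs from `a` in `k` coordinates, and `x` differs from `a` in `k + m`. Some `b ∈ S` has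
`dist(w, b) = d + e` with `e ≥ 0`, since otherwise maximality would put the 1-ball around `w` into
`S`. On the set `B` of coordinates where `w = a ≠ b`, the word `x` must move towards `b`: giving
weight `1` to each `i ∈ B` with `x i ≠ a i` and one more if `x i = b i`, it collects at least
`m + e`, because `dist(x, b) ≤ d`. On the other hand, the `n` letters at one coordinate have total
weight `n`, and `2 |B| ≤ 2 d - k + e` because `dist(a, b) ≤ d`. Double counting bounds the number of
targets by `(n / 2) ^ m * (2 d - k).choose m`, by induction on `m`. Taking `w = a` and summing over
`j ≤ d` gives at most `(n / 2) ^ d * 2 ^ (2 d) = (2 n) ^ d`.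
-/

open Finset

section Words

variable {ι α : Type*}

/-- The Hamming distance between words over an arbitrary index set, infinite when the words differ
in infinitely many coordinates; on `ℕ → Fin n` it is definitionally `hDist n`. -/
noncomputable def ehammingDist (a b : ι → α) : ℕ∞ := {i | a i ≠ b i}.encard

/-- The word `w` lies between `a` and `x` in the Hamming metric: it arises from `a` by copying some
of the letters of `x`. -/
def IsBetween (a w x : ι → α) : Prop := ∀ i, w i = a i ∨ w i = x i

theorem ehammingDist_self (a : ι → α) : ehammingDist a a = 0 := by
  simp [ehammingDist]

theorem ehammingDist_triangle (a b c : ι → α) :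
    ehammingDist a c ≤ ehammingDist a b + ehammingDist b c := by
  refine (Set.encard_le_encard fun i (hi : a i ≠ c i) ↦ ?_).trans (Set.encard_union_le _ _)
  by_contra! h
  simp only [Set.mem_union, Set.mem_ofPred_eq, not_or, not_not] at h
  exact hi (h.1.trans h.2)

theorem ehammingDist_update [DecidableEq ι] {a w : ι → α} {i : ι} {v : α} (hi : w i = a i)
    (hv : v ≠ a i) : ehammingDist (Function.update w i v) a = ehammingDist w a + 1 := by
  have hset : {l | Function.update w i v l ≠ a l} = insert i {l | w l ≠ a l} := by
    ext l
    obtain rfl | hl := eq_or_ne l i <;> simp [*]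
  rw [ehammingDist, hset, Set.encard_insert_of_notMem (by simpa using hi), ehammingDist]

theorem IsBetween.update [DecidableEq ι] {a w x : ι → α} (h : IsBetween a w x) (i : ι) :
    IsBetween a (Function.update w i (x i)) x := fun l ↦ by
  obtain rfl | hl := eq_or_ne l i
  · simp
  · simpa [hl] using h l

theorem IsBetween.eq_of_ehammingDist_le {a w x : ι → α} (h : IsBetween a w x)
    (hfin : ehammingDist w a ≠ ⊤) (hle : ehammingDist x a ≤ ehammingDist w a) : x = w := by
  have hsub : {i | w i ≠ a i} ⊆ {i | x i ≠ a i} := fun i hi ↦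
    ne_of_eq_of_ne ((h i).resolve_left hi).symm hi
  have heq := (Set.encard_ne_top_iff.1 hfin).eq_of_subset_of_encard_le hsub hle
  funext i
  rcases h i with hwa | hwx
  · have hi : i ∉ {i | x i ≠ a i} := heq ▸ not_not.2 hwa
    exact (not_not.1 hi).trans hwa.symm
  · exact hwx.symm

theorem two_mul_encard_add_ehammingDist_le (a b w : ι → α) :
    2 * {i | w i = a i ∧ a i ≠ b i}.encard + ehammingDist w a ≤
      ehammingDist w b + ehammingDist a b := by
  set B := {i | w i = a i ∧ a i ≠ b i} with hB
  have hdisj : Disjoint B {i | w i ≠ a i} := Set.disjoint_left.2 fun i hi hwa ↦ hwa hi.1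
  have hunion : B ∪ {i | w i ≠ a i} ⊆ {i | w i ≠ b i} ∪ {i | a i ≠ b i} := by
    intro i
    simp only [hB, Set.mem_union, Set.mem_ofPred_eq]
    grind
  have hinter : B ⊆ {i | w i ≠ b i} ∩ {i | a i ≠ b i} := fun i hi ↦
    ⟨ne_of_eq_of_ne hi.1 hi.2, hi.2⟩
  calc 2 * B.encard + ehammingDist w a
      = (B ∪ {i | w i ≠ a i}).encard + B.encard := by
        rw [Set.encard_union_eq hdisj, ehammingDist, two_mul, add_right_comm]
    _ ≤ ({i | w i ≠ b i} ∪ {i | a i ≠ b i}).encard + ({i | w i ≠ b i} ∩ {i | a i ≠ b i}).encard :=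
        add_le_add (Set.encard_le_encard hunion) (Set.encard_le_encard hinter)
    _ = ehammingDist w b + ehammingDist a b := Set.encard_union_add_encard_inter _ _

theorem IsBetween.ehammingDist_add_ehammingDist_le {a w x : ι → α} (h : IsBetween a w x)
    (b : ι → α) :
    ehammingDist w b + ehammingDist x a ≤ ehammingDist x b + ehammingDist w a +
      ({i | (w i = a i ∧ a i ≠ b i) ∧ x i ≠ a i}.encard +
        {i | (w i = a i ∧ a i ≠ b i) ∧ x i = b i}.encard) := by
  set moved := {i | (w i = a i ∧ a i ≠ b i) ∧ x i ≠ a i} with hmoved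
  set hit := {i | (w i = a i ∧ a i ≠ b i) ∧ x i = b i} with hhit
  have hunion : {i | w i ≠ b i} ∪ {i | x i ≠ a i} ⊆
      ({i | x i ≠ b i} ∪ {i | w i ≠ a i}) ∪ hit := by
    intro i
    have := h i
    simp only [hhit, Set.mem_union, Set.mem_ofPred_eq]
    grind
  have hinter : {i | w i ≠ b i} ∩ {i | x i ≠ a i} ⊆
      ({i | x i ≠ b i} ∩ {i | w i ≠ a i}) ∪ moved := by
    intro i
    have := h i
    simp only [hmoved, Set.mem_union, Set.mem_inter_iff, Set.mem_ofPred_eq]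
    grind
  calc ehammingDist w b + ehammingDist x a
      = ({i | w i ≠ b i} ∪ {i | x i ≠ a i}).encard +
          ({i | w i ≠ b i} ∩ {i | x i ≠ a i}).encard :=
        (Set.encard_union_add_encard_inter _ _).symm
    _ ≤ (({i | x i ≠ b i} ∪ {i | w i ≠ a i}).encard + hit.encard) +
          (({i | x i ≠ b i} ∩ {i | w i ≠ a i}).encard + moved.encard) :=
        add_le_add ((Set.encard_le_encard hunion).trans (Set.encard_union_le _ _))
          ((Set.encard_le_encard hinter).trans (Set.encard_union_le _ _))
    _ = ehammingDist x b + ehammingDist w a + (moved.encard + hit.encard) := by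
        rw [add_add_add_comm, Set.encard_union_add_encard_inter, add_comm hit.encard]; rfl

theorem exists_finset_le_card_ne_add_card_eq [DecidableEq α] {d k : ℕ} {S : Set (ι → α)}
    (hdiam : ∀ x ∈ S, ∀ y ∈ S, ehammingDist x y ≤ d) (hrad : ∀ w, ∃ s ∈ S, d ≤ ehammingDist w s)
    {a w : ι → α} (ha : a ∈ S) (hw : ehammingDist w a = k) :
    ∃ (b : ι → α) (B : Finset ι) (e : ℕ), (∀ i ∈ B, w i = a i ∧ a i ≠ b i) ∧
      2 * #B + k ≤ 2 * d + e ∧ ∀ x ∈ S, IsBetween a w x → ∀ m : ℕ, ehammingDist x a = (k + m : ℕ) →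
        m + e ≤ #{i ∈ B | x i ≠ a i} + #{i ∈ B | x i = b i} := by
  obtain ⟨b, hb, hdb⟩ := hrad w
  have hab : ehammingDist a b ≤ d := hdiam a ha b hb
  have hwb : ehammingDist w b ≤ (k + d : ℕ) := by
    push_cast
    exact (ehammingDist_triangle w a b).trans (add_le_add hw.le hab)
  lift ehammingDist w b to ℕ using ne_top_of_le_ne_top (ENat.natCast_ne_top _) hwb with D hD
  obtain ⟨e, rfl⟩ := Nat.exists_eq_add_of_le (Nat.cast_le.1 hdb)
  have hfin : {i | w i = a i ∧ a i ≠ b i}.Finite :=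
    (Set.finite_of_encard_le_coe hab).subset fun i hi ↦ hi.2
  obtain ⟨B, hB⟩ := hfin.exists_finset
  refine ⟨b, B, e, fun i ↦ (hB i).1, ?_, fun x hx hbet m hxa ↦ ?_⟩
  · have hle := two_mul_encard_add_ehammingDist_le a b w
    have hcard : {i | w i = a i ∧ a i ≠ b i}.encard = #B := by
      rw [← Set.encard_coe_eq_coe_finsetCard]
      exact congrArg Set.encard (Set.ext fun i ↦ (hB i).symm)
    rw [hcard, hw, ← hD] at hle
    have : 2 * #B + k ≤ d + e + d := by exact_mod_cast hle.trans (add_le_add_right hab _)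
    omega
  · have hle := hbet.ehammingDist_add_ehammingDist_le b
    have hcard (p : ι → Prop) [DecidablePred p] :
        {i | (w i = a i ∧ a i ≠ b i) ∧ p i}.encard = #{i ∈ B | p i} := by
      rw [← Set.encard_coe_eq_coe_finsetCard]
      simp [hB]
    rw [hcard (fun i ↦ x i ≠ a i), hcard (fun i ↦ x i = b i), hw, hxa, ← hD] at hle
    have : d + e + (k + m) ≤ d + k + (#{i ∈ B | x i ≠ a i} + #{i ∈ B | x i = b i}) := by
      exact_mod_cast hle.trans (add_le_add_left (add_le_add_left (hdiam x hx b hb) _) _)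
    omega

end Words

section Counting

variable {α β ι R : Type*} [Fintype α] [DecidableEq α]
  [CommSemiring R] [PartialOrder R] [IsOrderedRing R]

theorem card_ne_add_card_eq_le (N : Finset β) (f : β → α) {p q : α} (hpq : p ≠ q) {M : R}
    (hM : ∀ v ≠ p, (#{x ∈ N | f x = v} : R) ≤ M) :
    (#{x ∈ N | f x ≠ p} : R) + #{x ∈ N | f x = q} ≤ Fintype.card α * M := by
  have hfiber : #{x ∈ N | f x ≠ p} = ∑ v ∈ univ.erase p, #{x ∈ N | f x = v} := by
    rw [card_eq_sum_card_fiberwise (f := f) (t := univ.erase p) (by simp [Set.MapsTo])]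
    refine sum_congr rfl fun v hv ↦ ?_
    rw [filter_filter]
    congr 1
    grind
  have hne : (#{x ∈ N | f x ≠ p} : R) ≤ #(univ.erase p) * M := by
    rw [hfiber, Nat.cast_sum, ← nsmul_eq_mul]
    exact sum_le_card_nsmul _ _ _ fun v hv ↦ hM v (ne_of_mem_erase hv)
  calc (#{x ∈ N | f x ≠ p} : R) + #{x ∈ N | f x = q} ≤ #(univ.erase p) * M + M :=
        add_le_add hne (hM q hpq.symm)
    _ = Fintype.card α * M := by
        rw [← card_univ, ← card_erase_add_one (mem_univ p)]; push_cast; ring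

theorem sum_card_ne_add_card_eq_le {N : Finset (ι → α)} {B : Finset ι} {a b : ι → α}
    (hab : ∀ i ∈ B, a i ≠ b i) {M : R}
    (hM : ∀ i ∈ B, ∀ v ≠ a i, (#{x ∈ N | x i = v} : R) ≤ M) :
    ((∑ x ∈ N, (#{i ∈ B | x i ≠ a i} + #{i ∈ B | x i = b i}) : ℕ) : R) ≤
      #B * (Fintype.card α * M) := by
  have hswap : ∑ x ∈ N, (#{i ∈ B | x i ≠ a i} + #{i ∈ B | x i = b i}) =
      ∑ i ∈ B, (#{x ∈ N | x i ≠ a i} + #{x ∈ N | x i = b i}) := by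
    rw [sum_add_distrib, sum_add_distrib]
    exact congrArg₂ _
      (sum_card_bipartiteAbove_eq_sum_card_bipartiteBelow fun (x : ι → α) i ↦ x i ≠ a i)
      (sum_card_bipartiteAbove_eq_sum_card_bipartiteBelow fun (x : ι → α) i ↦ x i = b i)
  rw [hswap, Nat.cast_sum, ← nsmul_eq_mul]
  refine sum_le_card_nsmul _ _ _ fun i hi ↦ ?_
  push_cast
  exact card_ne_add_card_eq_le N (fun x ↦ x i) (hab i hi) (hM i hi)

end Counting

theorem add_mul_choose_le_add_mul_choose_succ (r m e : ℕ) :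
    (r + 1 + e) * r.choose m ≤ (m + 1 + e) * (r + 1).choose (m + 1) := by
  have habsorb := Nat.add_one_mul_choose_eq r m
  have hpascal : r.choose m ≤ (r + 1).choose (m + 1) :=
    Nat.choose_succ_succ r m ▸ Nat.le_add_right _ _
  calc (r + 1 + e) * r.choose m = (r + 1) * r.choose m + e * r.choose m := add_mul _ _ _
    _ ≤ (r + 1).choose (m + 1) * (m + 1) + e * (r + 1).choose (m + 1) :=
        add_le_add habsorb.le (Nat.mul_le_mul_left e hpascal)
    _ = (m + 1 + e) * (r + 1).choose (m + 1) := by ring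

theorem le_mul_choose_succ_of_mul_le {K : Type*} [Field K] [LinearOrder K] [IsStrictOrderedRing K]
    {N q c : K} {r m e B : ℕ} (hq : 0 ≤ q) (hc : 0 ≤ c) (hB : 2 * B ≤ r + 1 + e)
    (hN : N * (m + 1 + e : ℕ) ≤ B * (q * (c * r.choose m))) :
    N ≤ q / 2 * c * (r + 1).choose (m + 1) := by
  have hB' : (B : K) ≤ (r + 1 + e : ℕ) / 2 := by
    rw [le_div_iff₀' two_pos]
    exact_mod_cast hB
  have hchoose : ((r + 1 + e : ℕ) : K) * r.choose m ≤ (m + 1 + e : ℕ) * (r + 1).choose (m + 1) :=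
    mod_cast add_mul_choose_le_add_mul_choose_succ r m e
  refine le_of_mul_le_mul_right ?_ (Nat.cast_pos.2 (by omega) : (0 : K) < (m + 1 + e : ℕ))
  calc N * (m + 1 + e : ℕ) ≤ B * (q * (c * r.choose m)) := hN
    _ ≤ (r + 1 + e : ℕ) / 2 * (q * (c * r.choose m)) := by gcongr
    _ = q / 2 * c * ((r + 1 + e : ℕ) * r.choose m) := by ring
    _ ≤ q / 2 * c * ((m + 1 + e : ℕ) * (r + 1).choose (m + 1)) := by gcongr
    _ = q / 2 * c * (r + 1).choose (m + 1) * (m + 1 + e : ℕ) := by ring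

theorem sum_range_pow_mul_choose_le {R : Type*} [CommSemiring R] [PartialOrder R] [IsOrderedRing R]
    {q : R} (hq : 1 ≤ q) {d n : ℕ} (hdn : d ≤ n) :
    ∑ j ∈ range (d + 1), q ^ j * n.choose j ≤ q ^ d * 2 ^ n := by
  have hq₀ : 0 ≤ q := zero_le_one.trans hq
  calc ∑ j ∈ range (d + 1), q ^ j * n.choose j
      ≤ ∑ j ∈ range (d + 1), q ^ d * n.choose j := by
        gcongr with j hj
        exact mem_range_succ_iff.1 hj
    _ ≤ ∑ j ∈ range (n + 1), q ^ d * n.choose j :=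
        sum_le_sum_of_subset_of_nonneg (range_mono (Nat.succ_le_succ hdn)) fun _ _ _ ↦ by positivity
    _ = q ^ d * 2 ^ n := by
        rw [← mul_sum, ← Nat.cast_sum, Nat.sum_range_choose, Nat.cast_pow, Nat.cast_ofNat]

section Bound

variable {ι α : Type*} [Fintype α] {d : ℕ} {S : Set (ι → α)}

theorem card_le_of_forall_isBetween (hdiam : ∀ x ∈ S, ∀ y ∈ S, ehammingDist x y ≤ d)
    (hrad : ∀ w, ∃ s ∈ S, d ≤ ehammingDist w s) {a : ι → α} (ha : a ∈ S) {m : ℕ} :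
    ∀ {k : ℕ} {w : ι → α} {F : Finset (ι → α)}, k + m ≤ d → ehammingDist w a = k →
      (∀ x ∈ F, x ∈ S ∧ IsBetween a w x ∧ ehammingDist x a = (k + m : ℕ)) →
      (#F : ℚ) ≤ (Fintype.card α / 2) ^ m * (2 * d - k).choose m := by
  classical
  induction m with
  | zero =>
    intro k w F _ hw hF
    have hFw : F ⊆ {w} := fun x hx ↦ mem_singleton.2 <|
      (hF x hx).2.1.eq_of_ehammingDist_le (hw ▸ ENat.natCast_ne_top k) (hw ▸ (hF x hx).2.2.le)
    simpa using card_le_card hFw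
  | succ m ih =>
    intro k w F hkm hw hF
    obtain ⟨b, B, e, hB, hBcard, hlower⟩ := exists_finset_le_card_ne_add_card_eq hdiam hrad ha hw
    obtain ⟨r, hr⟩ : ∃ r, 2 * d = k + (r + 1) := ⟨2 * d - k - 1, by omega⟩
    have hfiber : ∀ i ∈ B, ∀ v ≠ a i,
        (#{x ∈ F | x i = v} : ℚ) ≤ (Fintype.card α / 2) ^ m * r.choose m := by
      intro i hi v hv
      rw [show r = 2 * d - (k + 1) by omega]
      refine ih (w := Function.update w i v) (by omega) ?_ fun x hx ↦ ?_
      · rw [ehammingDist_update (hB i hi).1 hv, hw, Nat.cast_succ]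
      · obtain ⟨hxF, rfl⟩ := mem_filter.1 hx
        obtain ⟨hxS, hbet, hxa⟩ := hF x hxF
        exact ⟨hxS, hbet.update i, by rw [hxa, add_right_comm, add_assoc]⟩
    have hcount : (#F : ℚ) * (m + 1 + e : ℕ) ≤
        #B * (Fintype.card α * ((Fintype.card α / 2) ^ m * r.choose m)) := by
      refine le_trans ?_ (sum_card_ne_add_card_eq_le (fun i hi ↦ (hB i hi).2) hfiber)
      exact_mod_cast card_nsmul_le_sum F _ _ fun x hx ↦
        hlower x (hF x hx).1 (hF x hx).2.1 (m + 1) (hF x hx).2.2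
    rw [hr, Nat.add_sub_cancel_left, pow_succ']
    exact le_mul_choose_succ_of_mul_le (by positivity) (by positivity) (by omega) hcount

theorem card_le_two_mul_card_pow [Nontrivial α]
    (hdiam : ∀ x ∈ S, ∀ y ∈ S, ehammingDist x y ≤ d) (hrad : ∀ w, ∃ s ∈ S, d ≤ ehammingDist w s)
    {F : Finset (ι → α)} (hF : ↑F ⊆ S) : #F ≤ (2 * Fintype.card α) ^ d := by
  obtain ⟨a, ha, -⟩ := hrad (Classical.arbitrary _)
  have hdist : ∀ x ∈ F, ∃ j ≤ d, ehammingDist x a = j := fun x hx ↦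
    let ⟨j, hj, hjd⟩ := ENat.le_natCast_iff.1 (hdiam x (hF hx) a ha)
    ⟨j, hjd, hj⟩
  have hshell (j : ℕ) (hj : j ∈ range (d + 1)) : (#{x ∈ F | (ehammingDist x a).toNat = j} : ℚ) ≤
      (Fintype.card α / 2) ^ j * (2 * d).choose j := by
    refine card_le_of_forall_isBetween (k := 0) hdiam hrad ha (by simpa using hj)
      (ehammingDist_self a) fun x hx ↦ ?_
    obtain ⟨hxF, rfl⟩ := mem_filter.1 hx
    obtain ⟨j, -, hxa⟩ := hdist x hxF
    exact ⟨hF hxF, fun _ ↦ .inl rfl, by simp [hxa]⟩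
  have hmaps : Set.MapsTo (fun x ↦ (ehammingDist x a).toNat) F (range (d + 1)) := fun x hx ↦ by
    obtain ⟨j, hj, hxa⟩ := hdist x hx
    simpa [hxa] using hj
  have hq : (1 : ℚ) ≤ Fintype.card α / 2 := by
    rw [one_le_div two_pos]
    exact_mod_cast Fintype.one_lt_card (α := α)
  have hcard : (#F : ℚ) ≤ (2 * Fintype.card α) ^ d := by
    calc (#F : ℚ) ≤ ∑ j ∈ range (d + 1), (Fintype.card α / 2 : ℚ) ^ j * (2 * d).choose j := by
          rw [card_eq_sum_card_fiberwise hmaps, Nat.cast_sum]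
          exact sum_le_sum hshell
      _ ≤ (Fintype.card α / 2) ^ d * 2 ^ (2 * d) := sum_range_pow_mul_choose_le hq (by omega)
      _ = (2 * Fintype.card α) ^ d := by rw [pow_mul, ← mul_pow]; ring
  exact_mod_cast hcard

theorem stmt12_general [Nontrivial α]
    (hdiam : ∀ x ∈ S, ∀ y ∈ S, ehammingDist x y ≤ d) (hrad : ∀ w, ∃ s ∈ S, d ≤ ehammingDist w s) :
    S.Finite ∧ S.ncard ≤ (2 * Fintype.card α) ^ d := by
  rw [← Set.encard_le_coe_iff_finite_ncard_le]
  by_contra! hlt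
  obtain ⟨T, hTS, hT⟩ := Set.exists_subset_encard_eq (Order.add_one_le_of_lt hlt)
  obtain ⟨F, rfl⟩ := Set.Finite.exists_finset_coe (Set.finite_of_encard_eq_coe (mod_cast hT))
  rw [Set.encard_coe_eq_coe_finsetCard] at hT
  have hF := card_le_two_mul_card_pow hdiam hrad hTS
  have : #F = (2 * Fintype.card α) ^ d + 1 := by exact_mod_cast hT
  omega

end Bound

theorem IsDMaximal.exists_le_hDist {n d : ℕ} {S : Set (ℕ → Fin n)} (hmax : IsDMaximal n d S)
    (hball : ¬ ContainsBall n S 1) (w : ℕ → Fin n) : ∃ s ∈ S, d ≤ hDist n w s := by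
  by_contra! hlt
  refine hball ⟨w, fun x hx ↦ hmax.2.2 x fun s hs ↦ ?_⟩
  calc hDist n x s ≤ hDist n x w + hDist n w s := ehammingDist_triangle x w s
    _ ≤ 1 + hDist n w s := add_le_add_left (by simpa [hBall] using hx) _
    _ = hDist n w s + 1 := add_comm _ _
    _ ≤ d := Order.add_one_le_of_lt (hlt s hs)

theorem stmt12 (n d : ℕ) (hn : 2 ≤ n) (S : Set (ℕ → Fin n))
    (hmax : IsDMaximal n d S) (hball : ¬ ContainsBall n S 1) :
    S.Finite ∧ S.ncard ≤ (2 * n) ^ d := by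
  have := Fin.nontrivial_iff_two_le.2 hn
  simpa using stmt12_general hmax.1 (hmax.exists_le_hDist hball)
end

section
/- Let n ≥ 2 and d ≥ 1 be integers, let S ⊆ [n]^∞ be a d-maximal set that contains no 1-ball, and let w ∈ S. Then for every integer k with 0 ≤ k ≤ d, the set S_k = {a ∈ S : dist(a,w) = k} satisfies |S_k| ≤ (n/2)^k·binom(2d,k) (as real numbers). -/
/-!
Fix `w ∈ S` and count the words of `S` at distance `j + t` from `w` that agree with a given word `x`
wherever `x` leaves `w`, where `x` is at distance `j` from `w`. Since `S` is maximal and contains no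
`1`-ball, some `s ∈ S` has `dist(x,s) = d + m` with `m ≥ 0`. As `dist(a,s) ≤ d`, each counted word
`a` must make up for this on the set `E` of coordinates where `x` agrees with `w` but `s` does not:
scoring `1` for every `i ∈ E` with `a i ≠ w i`, and one more if `a i = s i`, the word `a` scores at
least `t + m`. On a coordinate `i ∈ E` the possible scores add up to `n` over the alphabet, and
fixing a letter `a i ≠ w i` amounts to replacing `x` by a word at distance `j + 1`, so double
counting and induction on `t` bound the number of words by `(n/2)^t * binom(2d - j, t)`. The factor
`1/2` comes from `2|E| ≤ 2d - j + m`, since `w` and `s` are themselves at distance at most `d`.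
-/

open Finset

section Counting

variable {β : Type*}

lemma finite_and_ncard_le_of_forall_finset_card_le {A : Set β} {c : ℝ}
    (h : ∀ F : Finset β, (F : Set β) ⊆ A → (#F : ℝ) ≤ c) :
    A.Finite ∧ (A.ncard : ℝ) ≤ c := by
  have hfin : A.Finite := by
    by_contra hinf
    obtain ⟨F, hFA, hF⟩ := Set.Infinite.exists_subset_card_eq hinf (⌊c⌋₊ + 1)
    have hFc := h F hFA
    rw [hF] at hFc
    exact (Nat.lt_floor_add_one c).not_ge (by exact_mod_cast hFc)
  refine ⟨hfin, ?_⟩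
  rw [Set.ncard_eq_toFinset_card A hfin]
  exact h _ hfin.coe_toFinset.subset

lemma card_filter_ne_add_card_filter_eq_le {γ : Type*} [Fintype γ] [DecidableEq γ]
    (F : Finset β) (f : β → γ) {u v : γ} (hvu : v ≠ u) {B : ℝ}
    (hB : ∀ c ≠ u, (#{a ∈ F | f a = c} : ℝ) ≤ B) :
    (#{a ∈ F | f a ≠ u} + #{a ∈ F | f a = v} : ℝ) ≤ Fintype.card γ * B := by
  have hne : (#{a ∈ F | f a ≠ u} : ℝ) ≤ (#(univ.erase u) : ℝ) * B := by
    rw [card_eq_sum_card_fiberwise (f := f) (t := univ.erase u) (by intro a; simp), Nat.cast_sum,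
      ← nsmul_eq_mul]
    refine sum_le_card_nsmul _ _ _ fun c hc => (hB c (ne_of_mem_erase hc)).trans' ?_
    gcongr
    exact filter_subset _ _
  have hcard : (#(univ.erase u) : ℝ) + 1 = Fintype.card γ := by
    exact_mod_cast card_erase_add_one (mem_univ u)
  calc (#{a ∈ F | f a ≠ u} + #{a ∈ F | f a = v} : ℝ)
      ≤ (#(univ.erase u) : ℝ) * B + B := add_le_add hne (hB v hvu)
    _ = Fintype.card γ * B := by rw [← hcard]; ring

lemma card_mul_le_card_mul_of_card_fiber_le {ι : Type*} {α : ι → Type*} [∀ i, Fintype (α i)]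
    [∀ i, DecidableEq (α i)] {n r : ℕ} (hn : ∀ i, Fintype.card (α i) ≤ n)
    {F : Finset (∀ i, α i)} {E : Finset ι} {w s : ∀ i, α i} (hsw : ∀ i ∈ E, s i ≠ w i)
    (hr : ∀ a ∈ F, r ≤ #{i ∈ E | a i ≠ w i} + #{i ∈ E | a i = s i}) {B : ℝ}
    (hB : ∀ i ∈ E, ∀ c ≠ w i, (#{a ∈ F | a i = c} : ℝ) ≤ B) :
    (#F * r : ℝ) ≤ #E * (n * B) := by
  have hswap : ∑ a ∈ F, (#{i ∈ E | a i ≠ w i} + #{i ∈ E | a i = s i}) =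
      ∑ i ∈ E, (#{a ∈ F | a i ≠ w i} + #{a ∈ F | a i = s i}) := by
    rw [sum_add_distrib, sum_add_distrib]
    exact congrArg₂ (· + ·)
      (sum_card_bipartiteAbove_eq_sum_card_bipartiteBelow fun (a : ∀ i, α i) i => a i ≠ w i)
      (sum_card_bipartiteAbove_eq_sum_card_bipartiteBelow fun (a : ∀ i, α i) i => a i = s i)
  calc (#F * r : ℝ)
      ≤ ∑ i ∈ E, (#{a ∈ F | a i ≠ w i} + #{a ∈ F | a i = s i} : ℝ) := by
        exact_mod_cast (card_nsmul_le_sum F _ r hr).trans_eq hswap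
    _ ≤ #E • (n * B) := sum_le_card_nsmul _ _ _ fun i hi => by
        have hB₀ : 0 ≤ B := (Nat.cast_nonneg _).trans (hB i hi (s i) (hsw i hi))
        exact (card_filter_ne_add_card_filter_eq_le F (· i) (hsw i hi) (hB i hi)).trans
          (by gcongr; exact hn i)
    _ = #E * (n * B) := nsmul_eq_mul _ _

lemma mul_choose_le_mul_succ_choose_succ {l q m : ℕ} (h : l ≤ q + 1 + m) (t : ℕ) :
    l * q.choose t ≤ (t + 1 + m) * (q + 1).choose (t + 1) := by
  calc l * q.choose t
      ≤ (q + 1 + m) * q.choose t := Nat.mul_le_mul_right _ h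
    _ = (t + 1) * (q + 1).choose (t + 1) + m * q.choose t := by
        rw [add_mul, Nat.add_one_mul_choose_eq, mul_comm (t + 1)]
    _ ≤ (t + 1) * (q + 1).choose (t + 1) + m * (q + 1).choose (t + 1) := by
        gcongr
        exact Nat.choose_succ_succ q t ▸ Nat.le_add_right _ _
    _ = (t + 1 + m) * (q + 1).choose (t + 1) := by ring

lemma le_pow_mul_succ_choose_succ {c l m n q t : ℕ} (hl : 2 * l ≤ q + 1 + m)
    (hc : (c * (t + 1 + m : ℕ) : ℝ) ≤ l * (n * ((n / 2 : ℝ) ^ t * q.choose t))) :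
    (c : ℝ) ≤ (n / 2 : ℝ) ^ (t + 1) * (q + 1).choose (t + 1) := by
  have hchoose : ((2 * l * q.choose t : ℕ) : ℝ) ≤ ((t + 1 + m) * (q + 1).choose (t + 1) : ℕ) :=
    Nat.cast_le.mpr (mul_choose_le_mul_succ_choose_succ hl t)
  refine le_of_mul_le_mul_right ?_ (by positivity : (0 : ℝ) < (t + 1 + m : ℕ))
  calc (c * (t + 1 + m : ℕ) : ℝ)
      ≤ l * (n * ((n / 2 : ℝ) ^ t * q.choose t)) := hc
    _ = (n / 2 : ℝ) ^ (t + 1) * (2 * l * q.choose t : ℕ) := by push_cast; ring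
    _ ≤ (n / 2 : ℝ) ^ (t + 1) * ((t + 1 + m) * (q + 1).choose (t + 1) : ℕ) := by gcongr
    _ = (n / 2 : ℝ) ^ (t + 1) * (q + 1).choose (t + 1) * (t + 1 + m : ℕ) := by
        push_cast; ring

end Counting

section Words

variable {ι : Type*} {α : ι → Type*}

/-- The set of coordinates in which the words `a` and `b` differ. -/
def diffSet (a b : ∀ i, α i) : Set ι := {i | a i ≠ b i}

/-- The Hamming distance of words over an arbitrary index set, with a possibly different alphabet
at each coordinate; it is `⊤` if the words differ in infinitely many coordinates. -/
noncomputable def hammingEDist (a b : ∀ i, α i) : ℕ∞ := (diffSet a b).encard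

/-- The word `a` extends `x` relative to the base word `w`: viewing `x` as a partial word defined
where it differs from `w`, the word `a` takes the same values there. -/
def Extends (w x a : ∀ i, α i) : Prop := ∀ i ∈ diffSet x w, a i = x i

lemma diffSet_comm (a b : ∀ i, α i) : diffSet a b = diffSet b a :=
  Set.ext fun _ => ne_comm

lemma diffSet_subset_union (a b c : ∀ i, α i) : diffSet a c ⊆ diffSet a b ∪ diffSet b c := by
  intro i hac
  by_contra! h
  simp_all [diffSet]

lemma hammingEDist_triangle (a b c : ∀ i, α i) :
    hammingEDist a c ≤ hammingEDist a b + hammingEDist b c :=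
  (Set.encard_le_encard (diffSet_subset_union a b c)).trans (Set.encard_union_le _ _)

lemma diffSet_sdiff_diffSet (w s x : ∀ i, α i) :
    diffSet x s \ diffSet x w = diffSet w s \ diffSet x w := by
  ext i
  simp only [diffSet, Set.mem_sdiff, Set.mem_ofPred_eq, not_not]
  exact and_congr_left fun h => by rw [h]

lemma two_mul_encard_add_hammingEDist_le (w s x : ∀ i, α i) :
    2 * (diffSet w s \ diffSet x w).encard + hammingEDist x w ≤
      hammingEDist x s + hammingEDist w s := by
  set E := diffSet w s \ diffSet x w with hE
  have hcover : diffSet x w ⊆ diffSet x s ∩ diffSet x w ∪ diffSet w s ∩ diffSet x w := by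
    rw [← Set.union_inter_distrib_right, diffSet_comm w s]
    exact Set.subset_inter (diffSet_subset_union x s w) subset_rfl
  have hxs : E.encard + (diffSet x s ∩ diffSet x w).encard = hammingEDist x s := by
    rw [hE, ← diffSet_sdiff_diffSet, Set.encard_sdiff_add_encard_inter, hammingEDist]
  have hws : E.encard + (diffSet w s ∩ diffSet x w).encard = hammingEDist w s :=
    Set.encard_sdiff_add_encard_inter _ _
  calc 2 * E.encard + hammingEDist x w
      ≤ 2 * E.encard +
          ((diffSet x s ∩ diffSet x w).encard + (diffSet w s ∩ diffSet x w).encard) := by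
        gcongr
        exact (Set.encard_le_encard hcover).trans (Set.encard_union_le _ _)
    _ = hammingEDist x s + hammingEDist w s := by rw [← hxs, ← hws]; ring

lemma exists_le_hammingEDist_of_maximal {d : ℕ} {S : Set (∀ i, α i)}
    (hmax : ∀ x, (∀ s ∈ S, hammingEDist x s ≤ d) → x ∈ S) {x : ∀ i, α i}
    (hball : ¬ {y | hammingEDist y x ≤ 1} ⊆ S) : ∃ s ∈ S, d ≤ hammingEDist x s := by
  contrapose! hball
  refine fun y hy => hmax y fun s hs => ?_
  calc hammingEDist y s ≤ hammingEDist y x + hammingEDist x s := hammingEDist_triangle y x s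
    _ ≤ 1 + hammingEDist x s := by gcongr; exact hy
    _ ≤ d := add_comm (1 : ℕ∞) _ ▸ Order.add_one_le_of_lt (hball s hs)

namespace Extends

variable {w x a : ∀ i, α i}

lemma diffSet_subset (h : Extends w x a) : diffSet x w ⊆ diffSet a w :=
  fun i hi => (h i hi).trans_ne hi

lemma eq_of_hammingEDist_eq (h : Extends w x a) {j : ℕ} (hx : hammingEDist x w = j)
    (ha : hammingEDist a w = j) : a = x := by
  have hdiff : diffSet x w = diffSet a w :=
    (Set.finite_of_encard_eq_coe hx).eq_of_subset_of_encard_le h.diffSet_subset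
      (ha.trans hx.symm).le
  funext i
  by_cases hi : i ∈ diffSet x w
  · exact h i hi
  · have hai : i ∉ diffSet a w := hdiff ▸ hi
    exact (not_not.mp hai).trans (not_not.mp hi).symm

lemma update [DecidableEq ι] (h : Extends w x a) (i : ι) :
    Extends w (Function.update x i (a i)) a := by
  intro l hl
  rcases eq_or_ne l i with rfl | hli
  · rw [Function.update_self]
  · simp only [diffSet, Set.mem_ofPred_eq, Function.update_of_ne hli] at hl ⊢
    exact h l hl

lemma hammingEDist_add_hammingEDist (h : Extends w x a) (s : ∀ i, α i) :
    hammingEDist x s + hammingEDist a w = hammingEDist a s + hammingEDist x w +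
      (((diffSet w s \ diffSet x w) ∩ diffSet a w).encard +
        ((diffSet w s \ diffSet x w) \ diffSet a s).encard) := by
  set E := diffSet w s \ diffSet x w with hE
  -- Outside `diffSet x w` and `E` the words `x`, `w`, `s` agree, so `R` contributes equally to
  -- `hammingEDist a w` and to `hammingEDist a s`.
  set R := (diffSet a w \ diffSet x w) \ E with hR
  have hxs : hammingEDist x s =
      (E \ diffSet a s).encard + (E ∩ diffSet a s).encard +
        (diffSet x s ∩ diffSet x w).encard := by
    rw [Set.encard_sdiff_add_encard_inter, hE, ← diffSet_sdiff_diffSet,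
      Set.encard_sdiff_add_encard_inter, hammingEDist]
  have haw : hammingEDist a w = R.encard + (E ∩ diffSet a w).encard + hammingEDist x w := by
    have hinter : E ∩ diffSet a w = (diffSet a w \ diffSet x w) ∩ E := by
      rw [hE]; tauto_set
    rw [hinter, Set.encard_sdiff_add_encard_inter, hammingEDist, hammingEDist,
      Set.encard_sdiff_add_encard_of_subset h.diffSet_subset]
  have has : hammingEDist a s =
      R.encard + (E ∩ diffSet a s).encard + (diffSet x s ∩ diffSet x w).encard := by
    have hrest : R = (diffSet a s \ diffSet x w) \ E := by
      ext i
      simp only [hR, hE, diffSet, Set.mem_sdiff, Set.mem_ofPred_eq]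
      grind
    have hinter : E ∩ diffSet a s = (diffSet a s \ diffSet x w) ∩ E := by
      rw [hE]; tauto_set
    have hx : diffSet x s ∩ diffSet x w = diffSet a s ∩ diffSet x w := by
      ext i
      exact and_congr_left fun hi => by simp only [diffSet, Set.mem_ofPred_eq, h i hi]
    rw [hrest, hinter, hx, Set.encard_sdiff_add_encard_inter, Set.encard_sdiff_add_encard_inter,
      hammingEDist]
  rw [hxs, haw, has]
  ring

end Extends

lemma hammingEDist_update [DecidableEq ι] {w x : ∀ i, α i} {i : ι} (hi : x i = w i) {c : α i}
    (hc : c ≠ w i) : hammingEDist (Function.update x i c) w = hammingEDist x w + 1 := by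
  have hinsert : diffSet (Function.update x i c) w = insert i (diffSet x w) := by
    ext l
    rcases eq_or_ne l i with rfl | hli
    · simp [diffSet, hc]
    · simp [diffSet, hli]
  rw [hammingEDist, hinsert, Set.encard_insert_of_notMem (not_not.mpr hi), hammingEDist]

variable {d : ℕ} {S : Set (∀ i, α i)} {w : ∀ i, α i}

lemma exists_finset_add_le_card_add_card [∀ i, DecidableEq (α i)]
    (hdiam : ∀ a ∈ S, ∀ b ∈ S, hammingEDist a b ≤ d) (hw : w ∈ S) {s : ∀ i, α i} (hs : s ∈ S)
    {x : ∀ i, α i} (hxs : d ≤ hammingEDist x s) {j : ℕ} (hx : hammingEDist x w = j) :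
    ∃ (E : Finset ι) (m : ℕ), (∀ i ∈ E, x i = w i ∧ s i ≠ w i) ∧
      2 * #E + j ≤ 2 * d + m ∧
      ∀ a ∈ S, Extends w x a → ∀ t : ℕ, hammingEDist a w = (j + t : ℕ) →
        t + m ≤ #{i ∈ E | a i ≠ w i} + #{i ∈ E | a i = s i} := by
  have hws := hdiam w hw s hs
  have hfin : (diffSet w s \ diffSet x w).Finite := (Set.finite_of_encard_le_coe hws).sdiff
  obtain ⟨E, hE⟩ := hfin.exists_finset_coe
  have hxs_le : hammingEDist x s ≤ (j + d : ℕ) := by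
    calc hammingEDist x s ≤ hammingEDist x w + hammingEDist w s := hammingEDist_triangle x w s
      _ ≤ (j + d : ℕ) := by rw [hx, Nat.cast_add]; gcongr
  obtain ⟨N, hN, -⟩ := ENat.le_natCast_iff.mp hxs_le
  obtain ⟨m, rfl⟩ : ∃ m, N = d + m := Nat.exists_eq_add_of_le (by simpa [hN] using hxs)
  refine ⟨E, m, fun i hi => ?_, ?_, fun a ha hxa t haw => ?_⟩
  · have hi' : i ∈ diffSet w s \ diffSet x w := hE ▸ hi
    exact ⟨not_not.mp hi'.2, hi'.1.symm⟩
  · have hcard := two_mul_encard_add_hammingEDist_le w s x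
    rw [← hE, Set.encard_coe_eq_coe_finsetCard, hx, hN] at hcard
    have : 2 * #E + j ≤ d + m + d := by exact_mod_cast hcard.trans (add_le_add_right hws _)
    omega
  · have hsplit := hxa.hammingEDist_add_hammingEDist s
    have hne : (E : Set ι) ∩ diffSet a w = ({i ∈ E | a i ≠ w i} : Finset ι) := by
      ext i; simp [diffSet]
    have heq : (E : Set ι) \ diffSet a s = ({i ∈ E | a i = s i} : Finset ι) := by
      ext i; simp [diffSet]
    rw [← hE, hne, heq, Set.encard_coe_eq_coe_finsetCard, Set.encard_coe_eq_coe_finsetCard, hx,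
      hN, haw] at hsplit
    have : d + m + (j + t) ≤ d + j + (#{i ∈ E | a i ≠ w i} + #{i ∈ E | a i = s i}) := by
      exact_mod_cast hsplit.le.trans
        (add_le_add_left (add_le_add_left (hdiam a ha s hs) _) _)
    omega

variable [∀ i, Fintype (α i)] {n : ℕ}

theorem card_le_of_forall_extends (hn : ∀ i, Fintype.card (α i) ≤ n)
    (hdiam : ∀ a ∈ S, ∀ b ∈ S, hammingEDist a b ≤ d)
    (hfar : ∀ x, ∃ s ∈ S, d ≤ hammingEDist x s) (hw : w ∈ S) (t : ℕ) {j : ℕ} {x : ∀ i, α i}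
    (hx : hammingEDist x w = j) {F : Finset (∀ i, α i)} (hFS : ∀ a ∈ F, a ∈ S)
    (hFw : ∀ a ∈ F, hammingEDist a w = (j + t : ℕ)) (hFx : ∀ a ∈ F, Extends w x a) :
    (#F : ℝ) ≤ (n / 2 : ℝ) ^ t * (2 * d - j).choose t := by
  classical
  induction t generalizing j x F with
  | zero =>
    have hsub : F ⊆ {x} := fun a ha =>
      mem_singleton.mpr ((hFx a ha).eq_of_hammingEDist_eq hx (hFw a ha))
    simpa using card_le_card hsub
  | succ t ih =>
    obtain rfl | ⟨a₀, ha₀⟩ := F.eq_empty_or_nonempty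
    · rw [card_empty, Nat.cast_zero]
      positivity
    have hjt : j + (t + 1) ≤ d := by
      exact_mod_cast (hFw a₀ ha₀).symm.le.trans (hdiam a₀ (hFS a₀ ha₀) w hw)
    obtain ⟨q, hq⟩ : ∃ q, 2 * d - j = q + 1 := ⟨2 * d - j - 1, by omega⟩
    obtain ⟨s, hs, hxs⟩ := hfar x
    obtain ⟨E, m, hE, hEcard, hscore⟩ := exists_finset_add_le_card_add_card hdiam hw hs hxs hx
    have hfiber : ∀ i ∈ E, ∀ c ≠ w i,
        (#{a ∈ F | a i = c} : ℝ) ≤ (n / 2 : ℝ) ^ t * q.choose t := by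
      intro i hi c hc
      have hq' : 2 * d - (j + 1) = q := by omega
      rw [← hq']
      refine ih (x := Function.update x i c) ?_ ?_ ?_ ?_
      · rw [hammingEDist_update (hE i hi).1 hc, hx, Nat.cast_add_one]
      · exact fun a ha => hFS a (mem_filter.mp ha).1
      · exact fun a ha => by rw [hFw a (mem_filter.mp ha).1, add_right_comm, add_assoc]
      · intro a ha
        obtain ⟨haF, rfl⟩ := mem_filter.mp ha
        exact (hFx a haF).update i
    have hcount : (#F * (t + 1 + m : ℕ) : ℝ) ≤ #E * (n * ((n / 2 : ℝ) ^ t * q.choose t)) :=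
      card_mul_le_card_mul_of_card_fiber_le hn (fun i hi => (hE i hi).2)
        (fun a ha => hscore a (hFS a ha) (hFx a ha) (t + 1) (hFw a ha)) hfiber
    rw [hq]
    exact le_pow_mul_succ_choose_succ (by omega) hcount

theorem stmt13_general (hn : ∀ i, Fintype.card (α i) ≤ n)
    (hdiam : ∀ a ∈ S, ∀ b ∈ S, hammingEDist a b ≤ d)
    (hfar : ∀ x, ∃ s ∈ S, d ≤ hammingEDist x s) (hw : w ∈ S) (k : ℕ) :
    {a ∈ S | hammingEDist a w = k}.Finite ∧
      ({a ∈ S | hammingEDist a w = k}.ncard : ℝ) ≤ (n / 2 : ℝ) ^ k * (2 * d).choose k := by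
  refine finite_and_ncard_le_of_forall_finset_card_le fun F hF => ?_
  have hww : diffSet w w = ∅ := by simp [diffSet]
  refine card_le_of_forall_extends hn hdiam hfar hw k (j := 0) (x := w) ?_
    (fun a ha => (hF ha).1) (fun a ha => ?_) (fun a _ i hi => ?_)
  · rw [hammingEDist, hww, Set.encard_empty, Nat.cast_zero]
  · rw [(hF ha).2, zero_add]
  · exact absurd rfl hi

end Words

theorem stmt13 (n d : ℕ) (hn : 2 ≤ n) (hd : 1 ≤ d) (S : Set (ℕ → Fin n))
    (hmax : IsDMaximal n d S) (hball : ¬ ContainsBall n S 1)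
    (w : ℕ → Fin n) (hw : w ∈ S) (k : ℕ) (hk : k ≤ d) :
    {a ∈ S | hDist n a w = (k : ℕ∞)}.Finite ∧
      ({a ∈ S | hDist n a w = (k : ℕ∞)}.ncard : ℝ) ≤
        ((n : ℝ) / 2) ^ k * ((2 * d).choose k : ℝ) :=
  stmt13_general (fun _ => (Fintype.card_fin n).le) hmax.1
    (fun x => exists_le_hammingEDist_of_maximal hmax.2.2 fun h => hball ⟨x, h⟩) hw k
end

section
/- Let k ≥ 1 be an integer and let S_even = {∅} ∪ {A ⊆ {1, …, 3k} : |A| = 2k}, viewed as a family of subsets of ℕ with distance dist(A,B) = |A Δ B| (the cardinality of the symmetric difference, possibly infinite). Then S_even has diameter 2k and is 2k-maximal: for every B ⊆ ℕ, if |B Δ A| ≤ 2k for all A ∈ S_even, then B ∈ S_even. In particular |S_even| = 1 + binom(3k, 2k). -/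
/-- Hamming distance between subsets of `ℕ`: the (possibly infinite) cardinality
of their symmetric difference. -/
noncomputable def setDist (A B : Set ℕ) : ℕ∞ := (symmDiff A B).encard

/-- The family `S_even = {∅} ∪ {A ⊆ {1,…,3k} : |A| = 2k}`. -/
def Seven (k : ℕ) : Set (Set ℕ) :=
  {∅} ∪ {A : Set ℕ | A ⊆ Set.Icc 1 (3 * k) ∧ A.ncard = 2 * k}

/-!
Let `U = {1, …, 3k}` and `r = 2k`, so that `2 |U| = 3 r`. The identity
`|A ∆ B| + |A| + |B| = 2 |A ∪ B|` shows that two `r`-subsets of `U` are at distance at most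
`2 |U| - 2 r = r`. For maximality, let `B` be within `r` of `∅` and of every `r`-subset of `U`. If
`U \ B` contains an `r`-set, that set is disjoint from `B`, so its distance `|B| + r` from `B`
forces `B = ∅`. Otherwise some `r`-subset of `U` contains `U \ B`, and its distance from `B` is
`|B| + 2 |U \ B| - r`, whence `|B| + 2 |U \ B| ≤ 2 r`. As
`2 |B| + 2 |U \ B| = 2 |U| + 2 |B \ U| = 3 r + 2 |B \ U|` and `|B| ≤ r`, this leaves only
`B ⊆ U` and `|B| = r`.
-/

open Set
open scoped symmDiff

variable {α : Type*} {U A B : Set α} {r : ℕ}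

/-- A family `S` of sets has diameter `d` for the Hamming distance `(A ∆ B).encard` if `d` is the
largest distance between members of `S`; the largest distance has to be attained. -/
structure HasHammingDiam (S : Set (Set α)) (d : ℕ∞) : Prop where
  encard_symmDiff_le : ∀ A ∈ S, ∀ B ∈ S, (A ∆ B).encard ≤ d
  exists_encard_symmDiff_eq : ∃ A ∈ S, ∃ B ∈ S, (A ∆ B).encard = d

/-- A family of sets is `d`-maximal if it has diameter `d` and contains every set which is within
Hamming distance `d` of all its members. -/
structure IsHammingMaximal (S : Set (Set α)) (d : ℕ∞) : Prop extends HasHammingDiam S d where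
  mem_of_forall_encard_symmDiff_le : ∀ B, (∀ A ∈ S, (B ∆ A).encard ≤ d) → B ∈ S

/-- The layer `binom(U, r)` of the power set of `U`: the `r`-element subsets of `U`. It is stated
with `encard`, so that infinite subsets are excluded also for `r = 0`. -/
def layer (U : Set α) (r : ℕ) : Set (Set α) := {A | A ⊆ U ∧ A.encard = r}

theorem encard_symmDiff_add_encard_add_encard (A B : Set α) :
    (A ∆ B).encard + (A.encard + B.encard) = 2 * (A ∪ B).encard := by
  have h_union : (A ∆ B).encard + (A ∩ B).encard = (A ∪ B).encard := by
    rw [← encard_union_eq (s := A ∆ B) (t := A ∩ B) (disjoint_symmDiff_inf A B)]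
    exact congrArg encard (symmDiff_sup_inf A B)
  rw [← encard_union_add_encard_inter, add_left_comm, h_union, two_mul]

theorem encard_symmDiff_empty (A : Set α) : (A ∆ ∅).encard = A.encard :=
  congrArg encard (symmDiff_bot A)

theorem encard_empty_symmDiff (A : Set α) : (∅ ∆ A).encard = A.encard :=
  congrArg encard (bot_symmDiff A)

theorem encard_symmDiff_le_of_mem_layer (hU : 2 * U.encard ≤ 3 * r) (hA : A ∈ layer U r)
    (hB : B ∈ layer U r) : (A ∆ B).encard ≤ r := by
  have h : (A ∆ B).encard + (r + r : ℕ) ≤ r + (r + r : ℕ) :=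
    calc (A ∆ B).encard + (r + r : ℕ) = 2 * (A ∪ B).encard := by
          rw [← encard_symmDiff_add_encard_add_encard, hA.2, hB.2, Nat.cast_add]
      _ ≤ 2 * U.encard := by gcongr; exact union_subset hA.1 hB.1
      _ ≤ 3 * r := hU
      _ = r + (r + r : ℕ) := by push_cast; ring
  exact (ENat.add_le_add_iff_right (ENat.natCast_ne_top _)).1 h

theorem hasHammingDiam_insert_empty_layer (hr : r ≤ U.encard) (hU : 2 * U.encard ≤ 3 * r) :
    HasHammingDiam (insert ∅ (layer U r)) r where
  encard_symmDiff_le := by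
    rintro A (rfl | hA) B (rfl | hB)
    · simp
    · exact ((encard_empty_symmDiff B).trans hB.2).le
    · exact ((encard_symmDiff_empty A).trans hA.2).le
    · exact encard_symmDiff_le_of_mem_layer hU hA hB
  exists_encard_symmDiff_eq := by
    obtain ⟨A, hAU, hA⟩ := exists_subset_encard_eq hr
    exact ⟨∅, mem_insert _ _, A, mem_insert_of_mem _ ⟨hAU, hA⟩,
      (encard_empty_symmDiff A).trans hA⟩

theorem eq_empty_of_forall_mem_layer_encard_symmDiff_le (hr : r ≤ (U \ B).encard)
    (hB : ∀ A ∈ layer U r, (B ∆ A).encard ≤ r) : B = ∅ := by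
  obtain ⟨A, hAU, hA⟩ := exists_subset_encard_eq hr
  have h_disj : Disjoint B A := disjoint_sdiff_right.mono_right hAU
  have h : B.encard + r ≤ 0 + r :=
    calc B.encard + r = (B ∪ A).encard := by rw [encard_union_eq h_disj, hA]
      _ = (B ∆ A).encard := congrArg encard h_disj.symmDiff_eq_sup.symm
      _ ≤ r := hB A ⟨hAU.trans sdiff_subset, hA⟩
      _ = 0 + r := (zero_add _).symm
  exact encard_eq_zero.1 <|
    nonpos_iff_eq_zero.1 ((ENat.add_le_add_iff_right (ENat.natCast_ne_top r)).1 h)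

theorem encard_add_two_mul_encard_sdiff_le (hBfin : B.Finite) (hUB : (U \ B).encard ≤ r)
    (hr : r ≤ U.encard) (hB : ∀ A ∈ layer U r, (B ∆ A).encard ≤ r) :
    B.encard + 2 * (U \ B).encard ≤ 2 * r := by
  obtain ⟨A, hUBA, hAU, hA⟩ := exists_superset_subset_encard_eq sdiff_subset hUB hr
  have h_union : B ∪ A = U \ B ∪ B := by grind
  have h : B.encard + 2 * (U \ B).encard + B.encard ≤ 2 * r + B.encard :=
    calc B.encard + 2 * (U \ B).encard + B.encard = 2 * (B ∪ A).encard := by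
          rw [h_union, encard_union_eq disjoint_sdiff_left]; ring
      _ = (B ∆ A).encard + (B.encard + r) := by
          rw [← encard_symmDiff_add_encard_add_encard, hA]
      _ ≤ r + (B.encard + r) := by gcongr; exact hB A ⟨hAU, hA⟩
      _ = 2 * r + B.encard := by ring
  exact (ENat.add_le_add_iff_right hBfin.encard_lt_top.ne).1 h

theorem mem_layer_of_encard_add_two_mul_encard_sdiff_le (hU : 3 * r ≤ 2 * U.encard)
    (hBr : B.encard ≤ r) (hB : B.encard + 2 * (U \ B).encard ≤ 2 * r) : B ∈ layer U r := by
  have h_union : (U \ B).encard + B.encard = (B \ U).encard + U.encard := by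
    rw [encard_sdiff_add_encard, encard_sdiff_add_encard, union_comm]
  have h_add : r + 2 * (B \ U).encard + (2 * r : ℕ) ≤ B.encard + (2 * r : ℕ) :=
    calc r + 2 * (B \ U).encard + (2 * r : ℕ) = 3 * r + 2 * (B \ U).encard := by push_cast; ring
      _ ≤ 2 * U.encard + 2 * (B \ U).encard := by gcongr
      _ = B.encard + (B.encard + 2 * (U \ B).encard) := by
          rw [← mul_add, add_comm U.encard, ← h_union]; ring
      _ ≤ B.encard + (2 * r : ℕ) := by push_cast; gcongr
  have h_le : r + 2 * (B \ U).encard ≤ B.encard :=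
    (ENat.add_le_add_iff_right (ENat.natCast_ne_top (2 * r))).1 h_add
  have h_sdiff : (B \ U).encard = 0 := by
    have h : r + 2 * (B \ U).encard ≤ r + 0 := by simpa only [add_zero] using h_le.trans hBr
    simpa using (ENat.add_le_add_iff_left (ENat.natCast_ne_top r)).1 h
  exact ⟨sdiff_eq_empty.1 (encard_eq_zero.1 h_sdiff), hBr.antisymm (le_self_add.trans h_le)⟩

theorem le_encard_of_three_mul_le_two_mul_encard (hU : 3 * r ≤ 2 * U.encard) : r ≤ U.encard := by
  generalize U.encard = u at *
  enat_to_nat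
  omega

theorem mem_insert_empty_layer_of_forall_encard_symmDiff_le (hU : 3 * r ≤ 2 * U.encard)
    (hB : ∀ A ∈ insert ∅ (layer U r), (B ∆ A).encard ≤ r) : B ∈ insert ∅ (layer U r) := by
  have hBr : B.encard ≤ r :=
    (encard_symmDiff_empty B).symm.trans_le (hB ∅ (mem_insert _ _))
  have hB_layer : ∀ A ∈ layer U r, (B ∆ A).encard ≤ r := fun A hA ↦ hB A (mem_insert_of_mem _ hA)
  rcases le_total (r : ℕ∞) (U \ B).encard with h | h
  · exact Or.inl (eq_empty_of_forall_mem_layer_encard_symmDiff_le h hB_layer)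
  · exact Or.inr <| mem_layer_of_encard_add_two_mul_encard_sdiff_le hU hBr <|
      encard_add_two_mul_encard_sdiff_le (finite_of_encard_le_coe hBr) h
        (le_encard_of_three_mul_le_two_mul_encard hU) hB_layer

theorem isHammingMaximal_insert_empty_layer (hU : 2 * U.encard = 3 * r) :
    IsHammingMaximal (insert ∅ (layer U r)) r where
  toHasHammingDiam :=
    hasHammingDiam_insert_empty_layer (le_encard_of_three_mul_le_two_mul_encard hU.ge) hU.le
  mem_of_forall_encard_symmDiff_le _ :=
    mem_insert_empty_layer_of_forall_encard_symmDiff_le hU.ge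

theorem layer_coe (U : Finset α) (r : ℕ) :
    layer (U : Set α) r = (↑) '' (U.powersetCard r : Set (Finset α)) := by
  ext A
  simp only [layer, mem_ofPred_eq, mem_image, Finset.mem_coe, Finset.mem_powersetCard]
  constructor
  · rintro ⟨hAU, hA⟩
    lift A to Finset α using U.finite_toSet.subset hAU
    exact ⟨A, ⟨mod_cast hAU, by simpa using hA⟩, rfl⟩
  · rintro ⟨A, ⟨hAU, rfl⟩, rfl⟩
    exact ⟨mod_cast hAU, encard_coe_eq_coe_finsetCard A⟩

theorem finite_layer (hU : U.Finite) (r : ℕ) : (layer U r).Finite :=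
  hU.finite_subsets.subset fun _ hA ↦ hA.1

theorem ncard_layer (hU : U.Finite) (r : ℕ) : (layer U r).ncard = U.ncard.choose r := by
  lift U to Finset α using hU
  rw [layer_coe, ncard_image_of_injective _ Finset.coe_injective, ncard_coe_finset,
    Finset.card_powersetCard, ncard_coe_finset]

theorem empty_notMem_layer (hr : r ≠ 0) : ∅ ∉ layer U r := fun h ↦
  hr (by simpa using h.2.symm)

theorem ncard_insert_empty_layer (hU : U.Finite) (hr : r ≠ 0) :
    (insert ∅ (layer U r)).ncard = 1 + U.ncard.choose r := by
  rw [ncard_insert_of_notMem (empty_notMem_layer hr) (finite_layer hU r), ncard_layer hU, add_comm]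

theorem stmt15_general (hr : r ≠ 0) (hU : 2 * U.encard = 3 * r) :
    IsHammingMaximal (insert ∅ (layer U r)) r ∧
      (insert ∅ (layer U r)).ncard = 1 + U.ncard.choose r := by
  have hUfin : U.Finite := by
    refine encard_ne_top_iff.1 fun h ↦ ENat.natCast_ne_top (3 * r) ?_
    simpa [h] using hU.symm
  exact ⟨isHammingMaximal_insert_empty_layer hU, ncard_insert_empty_layer hUfin hr⟩

theorem seven_eq_insert_empty_layer (k : ℕ) :
    Seven k = insert ∅ (layer (Icc 1 (3 * k)) (2 * k)) := by
  ext A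
  refine or_congr_right (and_congr_right fun hA ↦ ?_)
  rw [← ((finite_Icc _ _).subset hA).cast_ncard_eq, Nat.cast_inj]

theorem two_mul_encard_Icc_one_three_mul (k : ℕ) :
    2 * (Icc 1 (3 * k)).encard = 3 * (2 * k : ℕ) := by
  rw [← Finset.coe_Icc, encard_coe_eq_coe_finsetCard, Nat.card_Icc, Nat.add_sub_cancel]
  push_cast
  ring

theorem stmt15 (k : ℕ) (hk : 1 ≤ k) :
    (∀ A ∈ Seven k, ∀ B ∈ Seven k, setDist A B ≤ ((2 * k : ℕ) : ℕ∞)) ∧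
    (∃ A ∈ Seven k, ∃ B ∈ Seven k, setDist A B = ((2 * k : ℕ) : ℕ∞)) ∧
    (∀ B : Set ℕ, (∀ A ∈ Seven k, setDist B A ≤ ((2 * k : ℕ) : ℕ∞)) → B ∈ Seven k) ∧
    (Seven k).ncard = 1 + (3 * k).choose (2 * k) := by
  obtain ⟨⟨⟨h_le, h_eq⟩, h_mem⟩, h_ncard⟩ :=
    stmt15_general (by omega) (two_mul_encard_Icc_one_three_mul k)
  rw [seven_eq_insert_empty_layer]
  exact ⟨h_le, h_eq, h_mem, by simpa using h_ncard⟩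
end

section
/- Let k ≥ 1 be an integer, let S_even = {∅} ∪ {A ⊆ {1, …, 3k} : |A| = 2k}, and let S_odd = {A ⊆ {1, …, 3k+1} : A ∩ {1, …, 3k} ∈ S_even}, viewed as families of subsets of ℕ with distance dist(A,B) = |A Δ B|. Then S_odd has diameter 2k+1 and is (2k+1)-maximal: for every B ⊆ ℕ, if |B Δ A| ≤ 2k+1 for all A ∈ S_odd, then B ∈ S_odd. -/
/-- The family `S_odd = {A ⊆ {1,…,3k+1} : A ∩ {1,…,3k} ∈ S_even}`. -/
def Sodd (k : ℕ) : Set (Set ℕ) :=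
  {A : Set ℕ | A ⊆ Set.Icc 1 (3 * k + 1) ∧ A ∩ Set.Icc 1 (3 * k) ∈ Seven k}

/-!
Let `2|I| = 3m`, and let `S` consist of `∅` and the `m`-subsets of `I`. Two `m`-subsets share at
least `2m - |I| = m / 2` points, so their distance is at most `m`, which is also their distance to
`∅`. Conversely, if `B` is within `m` of every member of `S`, compare it with an `m`-subset of `I`
that meets `B` as little as possible: the bound, together with `|B| ≤ m`, leaves only `B = ∅`, or
`B ⊆ I` and `|B| = m`.

Letting a new point `p` be free adds one to the diameter and keeps maximality: whether or not
`p ∈ B`, each `A ∈ S` has an extension `A` or `A ∪ {p}` that disagrees with `B` at `p`.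
-/

open Finset
open scoped symmDiff

variable {α : Type*}

/-- The family `S` has diameter `d` for the distance `|A ∆ B|` and is `d`-maximal: it already
contains every set within distance `d` of all its members. -/
structure IsMaximalOfDiam (S : Set (Set α)) (d : ℕ∞) : Prop where
  encard_symmDiff_le : ∀ A ∈ S, ∀ B ∈ S, (A ∆ B).encard ≤ d
  exists_encard_symmDiff_eq : ∃ A ∈ S, ∃ B ∈ S, (A ∆ B).encard = d
  mem_of_forall_encard_symmDiff_le : ∀ B, (∀ A ∈ S, (B ∆ A).encard ≤ d) → B ∈ S

/-- The family of the sets that belong to `S` up to membership of `p`. If no member of `S` contains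
`p`, this is the product of `S` with `{∅, {p}}`; it turns `S_even` into `S_odd`. -/
def freeAt (p : α) (S : Set (Set α)) : Set (Set α) :=
  {A | A \ {p} ∈ S}

/-- The family consisting of `∅` and the `m`-element subsets of `I`, viewed as sets; it generalizes
`S_even`. -/
def emptyOrCardEq (I : Finset α) (m : ℕ) : Set (Set α) :=
  (↑) '' {A : Finset α | A = ∅ ∨ A ∈ I.powersetCard m}

section FreeCoordinate

variable {p : α} {S : Set (Set α)} {d : ℕ∞}

theorem encard_symmDiff_le_encard_symmDiff_sdiff_singleton_add_one (p : α) (A B : Set α) :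
    (A ∆ B).encard ≤ ((A \ {p}) ∆ (B \ {p})).encard + 1 := by
  have hsub : A ∆ B ⊆ insert p ((A \ {p}) ∆ (B \ {p})) := by
    intro x
    simp only [Set.mem_symmDiff, Set.mem_insert_iff, Set.mem_sdiff, Set.mem_singleton_iff]
    tauto
  exact (Set.encard_le_encard hsub).trans (Set.encard_insert_le _ _)

theorem mem_freeAt {A : Set α} : A ∈ freeAt p S ↔ A \ {p} ∈ S := Iff.rfl

theorem exists_mem_freeAt_encard_symmDiff_eq {A : Set α} (hA : A ∈ S) (hpA : p ∉ A) (B : Set α) :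
    ∃ A' ∈ freeAt p S, (B ∆ A').encard = ((B \ {p}) ∆ A).encard + 1 := by
  have hp : p ∉ (B \ {p}) ∆ A := by simp [Set.mem_symmDiff, hpA]
  rw [← Set.encard_insert_of_notMem hp]
  by_cases hpB : p ∈ B
  · refine ⟨A, by simpa [mem_freeAt, hpA] using hA, congrArg Set.encard ?_⟩
    ext x
    by_cases hx : x = p <;> simp [Set.mem_symmDiff, hx, hpA, hpB]
  · refine ⟨insert p A, by simpa [mem_freeAt, hpA] using hA, congrArg Set.encard ?_⟩
    ext x
    by_cases hx : x = p <;> simp [Set.mem_symmDiff, hx, hpB]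

theorem IsMaximalOfDiam.freeAt (hS : IsMaximalOfDiam S d) (hp : ∀ A ∈ S, p ∉ A) :
    IsMaximalOfDiam (freeAt p S) (d + 1) where
  encard_symmDiff_le A hA B hB :=
    (encard_symmDiff_le_encard_symmDiff_sdiff_singleton_add_one p A B).trans <| by
      gcongr
      exact hS.encard_symmDiff_le _ hA _ hB
  exists_encard_symmDiff_eq := by
    obtain ⟨B, hB, A, hA, rfl⟩ := hS.exists_encard_symmDiff_eq
    obtain ⟨A', hA', hBA'⟩ := exists_mem_freeAt_encard_symmDiff_eq hA (hp A hA) B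
    have hBp : B \ {p} = B := Set.sdiff_singleton_eq_self (hp B hB)
    exact ⟨B, mem_freeAt.2 (hBp.symm ▸ hB), A', hA', hBA'.trans (by rw [hBp])⟩
  mem_of_forall_encard_symmDiff_le B hB := by
    refine hS.mem_of_forall_encard_symmDiff_le _ fun A hA ↦ ?_
    obtain ⟨A', hA', hBA'⟩ := exists_mem_freeAt_encard_symmDiff_eq hA (hp A hA) B
    have h : ((B \ {p}) ∆ A).encard + 1 ≤ d + 1 := hBA' ▸ hB A' hA'
    exact (ENat.add_le_add_iff_right ENat.one_ne_top).1 h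

end FreeCoordinate

section Finset

variable [DecidableEq α] {I A B : Finset α} {m : ℕ}

theorem card_symmDiff_add_two_mul_card_inter (A B : Finset α) :
    #(A ∆ B) + 2 * #(A ∩ B) = #A + #B := by
  have hunion : #(A ∆ B) = #(A \ B) + #(B \ A) := card_union_of_disjoint disjoint_sdiff_sdiff
  have hA := card_sdiff_add_card_inter A B
  have hB := card_sdiff_add_card_inter B A
  rw [inter_comm] at hB
  lia

theorem encard_symmDiff_coe (A B : Finset α) : ((A : Set α) ∆ B).encard = #(A ∆ B) := by
  rw [← coe_symmDiff, Set.encard_coe_eq_coe_finsetCard]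

theorem card_symmDiff_le_of_mem_powersetCard (hI : 2 * #I ≤ 3 * m)
    (hA : A ∈ I.powersetCard m) (hB : B ∈ I.powersetCard m) : #(A ∆ B) ≤ m := by
  rw [mem_powersetCard] at hA hB
  have hunion : #(A ∪ B) ≤ #I := card_le_card (union_subset hA.1 hB.1)
  have hinter := card_union_add_card_inter A B
  have hsymm := card_symmDiff_add_two_mul_card_inter A B
  lia

-- Truncated subtraction: the intersection is empty as soon as `I \ B` has `m` elements.
theorem exists_mem_powersetCard_card_inter_eq (hm : m ≤ #I) (B : Finset α) :
    ∃ A ∈ I.powersetCard m, #(B ∩ A) = m - #(I \ B) := by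
  rcases le_total m #(I \ B) with h | h
  · obtain ⟨A, hAsub, hAcard⟩ := exists_subset_card_eq h
    have hdisj : Disjoint B A := disjoint_sdiff.mono_right hAsub
    refine ⟨A, mem_powersetCard.2 ⟨hAsub.trans sdiff_subset, hAcard⟩, ?_⟩
    rw [disjoint_iff_inter_eq_empty.1 hdisj, card_empty, Nat.sub_eq_zero_of_le h]
  · obtain ⟨A, hsubA, hAI, hAcard⟩ := exists_subsuperset_card_eq sdiff_subset h hm
    have hinter : B ∩ A = A \ (I \ B) := by grind
    refine ⟨A, mem_powersetCard.2 ⟨hAI, hAcard⟩, ?_⟩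
    rw [hinter, card_sdiff_of_subset hsubA, hAcard]

theorem eq_empty_or_mem_powersetCard_of_forall_card_symmDiff_le
    (hI : 3 * m ≤ 2 * #I) (hB : #B ≤ m) (h : ∀ A ∈ I.powersetCard m, #(B ∆ A) ≤ m) :
    B = ∅ ∨ B ∈ I.powersetCard m := by
  have hm : m ≤ #I := by lia
  obtain ⟨A, hA, hinter⟩ := exists_mem_powersetCard_card_inter_eq hm B
  have hA_card : #A = m := (mem_powersetCard.1 hA).2
  have hB_le : #B ≤ 2 * (m - #(I \ B)) := by
    have hsymm := card_symmDiff_add_two_mul_card_inter B A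
    have hBA := h A hA
    lia
  have hI_card : #(I \ B) + #(I ∩ B) = #I := card_sdiff_add_card_inter I B
  rcases B.eq_empty_or_nonempty with hempty | hne
  · exact .inl hempty
  · have hpos : 0 < #B := hne.card_pos
    have hsub : I ∩ B = B := eq_of_subset_of_card_le inter_subset_right (by lia)
    exact .inr <| mem_powersetCard.2 ⟨inter_eq_right.1 hsub, by lia⟩

end Finset

theorem isMaximalOfDiam_emptyOrCardEq {I : Finset α} {m : ℕ} (hI : 2 * #I = 3 * m) :
    IsMaximalOfDiam (emptyOrCardEq I m) m := by
  classical
  have hm : m ≤ #I := by lia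
  have hempty : (∅ : Set α) ∈ emptyOrCardEq I m := ⟨∅, .inl rfl, coe_empty⟩
  refine ⟨?_, ?_, fun B hB ↦ ?_⟩
  · rintro _ ⟨A, hA, rfl⟩ _ ⟨B, hB, rfl⟩
    rw [encard_symmDiff_coe, Nat.cast_le]
    rcases hA with rfl | hA <;> rcases hB with rfl | hB
    · simp
    · simp [← bot_eq_empty, (mem_powersetCard.1 hB).2]
    · simp [← bot_eq_empty, (mem_powersetCard.1 hA).2]
    · exact card_symmDiff_le_of_mem_powersetCard hI.le hA hB
  · obtain ⟨A, hAI, hAcard⟩ := exists_subset_card_eq hm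
    refine ⟨∅, hempty, A, ⟨A, .inr (mem_powersetCard.2 ⟨hAI, hAcard⟩), rfl⟩, ?_⟩
    rw [← coe_empty, encard_symmDiff_coe, ← bot_eq_empty, bot_symmDiff, hAcard]
  · have hBm : B.encard ≤ m := by simpa [← Set.bot_eq_empty] using hB ∅ hempty
    obtain ⟨B, rfl⟩ := (Set.finite_of_encard_le_coe hBm).exists_finset_coe
    refine ⟨B, eq_empty_or_mem_powersetCard_of_forall_card_symmDiff_le hI.ge ?_ ?_, rfl⟩
    · simpa [Set.encard_coe_eq_coe_finsetCard] using hBm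
    · intro A hA
      simpa [encard_symmDiff_coe] using hB A ⟨A, .inr hA, rfl⟩

theorem stmt16_general {I : Finset α} {m : ℕ} {p : α} (hI : 2 * #I = 3 * m) (hp : p ∉ I) :
    IsMaximalOfDiam (freeAt p (emptyOrCardEq I m)) (m + 1) := by
  refine (isMaximalOfDiam_emptyOrCardEq hI).freeAt ?_
  rintro _ ⟨A, rfl | hA, rfl⟩ hpA
  · exact notMem_empty p hpA
  · exact hp ((mem_powersetCard.1 hA).1 hpA)

theorem Seven_eq_emptyOrCardEq (k : ℕ) : Seven k = emptyOrCardEq (Icc 1 (3 * k)) (2 * k) := by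
  ext A
  constructor
  · rintro (rfl | ⟨hAI, hAcard⟩)
    · exact ⟨∅, .inl rfl, coe_empty⟩
    · obtain ⟨A, rfl⟩ := ((Set.finite_Icc _ _).subset hAI).exists_finset_coe
      rw [Set.ncard_coe_finset] at hAcard
      rw [← coe_Icc, coe_subset] at hAI
      exact ⟨A, .inr (mem_powersetCard.2 ⟨hAI, hAcard⟩), rfl⟩
  · rintro ⟨A, rfl | hA, rfl⟩
    · exact .inl coe_empty
    · rw [mem_powersetCard, ← coe_subset, coe_Icc] at hA
      exact .inr ⟨hA.1, (Set.ncard_coe_finset A).trans hA.2⟩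

theorem subset_Icc_of_mem_Seven {k : ℕ} {A : Set ℕ} (hA : A ∈ Seven k) :
    A ⊆ Set.Icc 1 (3 * k) := by
  rcases hA with rfl | hA
  · exact Set.empty_subset _
  · exact hA.1

theorem Sodd_eq_freeAt_Seven (k : ℕ) : Sodd k = freeAt (3 * k + 1) (Seven k) := by
  ext A
  have hsub : A ⊆ Set.Icc 1 (3 * k + 1) ↔ A \ {3 * k + 1} ⊆ Set.Icc 1 (3 * k) := by
    simp only [Set.subset_def, Set.mem_Icc, Set.mem_sdiff, Set.mem_singleton_iff]
    grind
  have hinter (h : A \ {3 * k + 1} ⊆ Set.Icc 1 (3 * k)) :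
      A ∩ Set.Icc 1 (3 * k) = A \ {3 * k + 1} := by
    ext x
    have hx := @h x
    simp only [Set.mem_inter_iff, Set.mem_Icc, Set.mem_sdiff, Set.mem_singleton_iff] at hx ⊢
    grind
  rw [mem_freeAt]
  constructor
  · rintro ⟨hA, hmem⟩
    exact hinter (hsub.1 hA) ▸ hmem
  · intro hmem
    have hA := subset_Icc_of_mem_Seven hmem
    exact ⟨hsub.2 hA, (hinter hA).symm ▸ hmem⟩

theorem isMaximalOfDiam_Sodd (k : ℕ) : IsMaximalOfDiam (Sodd k) ((2 * k + 1 : ℕ) : ℕ∞) := by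
  rw [Sodd_eq_freeAt_Seven, Seven_eq_emptyOrCardEq, Nat.cast_add_one]
  exact stmt16_general (by rw [Nat.card_Icc]; lia) (by simp)

theorem stmt16 (k : ℕ) (hk : 1 ≤ k) :
    (∀ A ∈ Sodd k, ∀ B ∈ Sodd k, setDist A B ≤ ((2 * k + 1 : ℕ) : ℕ∞)) ∧
    (∃ A ∈ Sodd k, ∃ B ∈ Sodd k, setDist A B = ((2 * k + 1 : ℕ) : ℕ∞)) ∧
    (∀ B : Set ℕ, (∀ A ∈ Sodd k, setDist B A ≤ ((2 * k + 1 : ℕ) : ℕ∞)) → B ∈ Sodd k) := by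
  have h := isMaximalOfDiam_Sodd k
  exact ⟨h.encard_symmDiff_le, h.exists_encard_symmDiff_eq, h.mem_of_forall_encard_symmDiff_le⟩
end
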